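/- arXiv:2208.08387 — 11 statements merged into one kernel-verified Lean document; each statement's English description precedes it below -/
import Mathlib

section
/- Let m ≥ 1 and let T = (T_1,…,T_m) and S = (S_1,…,S_m) be commuting m-tuples of bounded linear operators on H acting as unilateral weighted shifts: T_i e_α = λ_α^{(i)} e_{α+e_i} and S_i e_α = μ_α^{(i)} e_{α+e_i} for all α ∈ ℕ^m and 1 ≤ i ≤ m, where all weights λ_α^{(i)}, μ_α^{(i)} are nonzero complex numbers. Then T and S are similar if and only if there exist constants C_1, C_2 > 0 such that for every 1 ≤ i ≤ m, every α ∈ ℕ^m and every integer l ≥ 0, C_1 ≤ |∏_{k=0}^{l} λ_{α+k·e_i}^{(i)} / ∏_{k=0}^{l} μ_{α+k·e_i}^{(i)}| ≤ C_2. -/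
open scoped BigOperators

/-!
Both sides of the equivalence are governed by *potentials*: nonvanishing scalars `d α` with
`d (α + e_i) * lam α i = mu α i * d α`. For such a `d` the ratio of weight products along a
coordinate ray telescopes to `d α / d (α + (l + 1) e_i)` (`prod_ratio_eq`).

If `X` intertwines `T` and `S`, its diagonal entries `⟪e α, X (e α)⟫` form a potential, and those of
`X⁻¹` form one with `lam` and `mu` interchanged. Since the range of each `S i` is orthogonal to `e 0`,
surjectivity of `X` forces `⟪e 0, X (e 0)⟫ ≠ 0`. The product of the diagonal entries of `X` and
`X⁻¹` does not depend on `α`, so both families are bounded above and away from `0`.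

Conversely, commutativity of the tuples provides a potential: if `T ^ α (e 0) = w α • e α` and
`S ^ α (e 0) = v α • e α`, then `d = v / w`. Reaching `α` from `0` along at most `m` coordinate rays
shows that `d` is bounded above and away from `0`, so the diagonal operator with entries `d α`
is bounded and invertible; it intertwines `T` and `S`.
-/

open scoped InnerProductSpace

section Shifts

variable {m : ℕ} {H : Type*} [NormedAddCommGroup H] [InnerProductSpace ℂ H]

/-- In coordinates: `S i` multiplies the coefficient at `α` by `mu α i` and moves it to `α + e_i`. -/
lemma shift_inner_succ (e : HilbertBasis (Fin m → ℕ) ℂ H) (S : Fin m → H →L[ℂ] H)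
    (mu : (Fin m → ℕ) → Fin m → ℂ)
    (hS : ∀ (α : Fin m → ℕ) (i : Fin m), S i (e α) = mu α i • e (α + Pi.single i 1))
    (α : Fin m → ℕ) (i : Fin m) (v : H) :
    ⟪e (α + Pi.single i 1), S i v⟫_ℂ = mu α i * ⟪e α, v⟫_ℂ := by
  have h : (innerSL ℂ (e (α + Pi.single i 1))) ∘L S i = mu α i • innerSL ℂ (e α) := by
    refine ContinuousLinearMap.ext_on
      (Submodule.dense_iff_topologicalClosure_eq_top.mpr e.dense_span) ?_
    rintro _ ⟨β, rfl⟩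
    have ho := orthonormal_iff_ite.mp e.orthonormal
    by_cases hβ : α = β
    · subst hβ
      simp [hS, e.orthonormal.norm_eq_one]
    · simp [hS, ho, hβ]
  simpa using congrArg (fun f => f v) h

lemma shift_inner_zero (e : HilbertBasis (Fin m → ℕ) ℂ H) (S : Fin m → H →L[ℂ] H)
    (mu : (Fin m → ℕ) → Fin m → ℂ)
    (hS : ∀ (α : Fin m → ℕ) (i : Fin m), S i (e α) = mu α i • e (α + Pi.single i 1))
    (i : Fin m) (v : H) :
    ⟪e 0, S i v⟫_ℂ = 0 := by
  have h : (innerSL ℂ (e 0)) ∘L S i = 0 := by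
    refine ContinuousLinearMap.ext_on
      (Submodule.dense_iff_topologicalClosure_eq_top.mpr e.dense_span) ?_
    rintro _ ⟨β, rfl⟩
    have ho := orthonormal_iff_ite.mp e.orthonormal
    have hne : (0 : Fin m → ℕ) ≠ β + Pi.single i 1 := by
      intro h
      simpa using congrFun h i
    simp [hS, ho, hne]
  simpa using congrArg (fun f => f v) h

lemma multiIndex_induction {P : (Fin m → ℕ) → Prop} (h0 : P 0)
    (hs : ∀ α i, P α → P (α + Pi.single i 1)) (α : Fin m → ℕ) : P α := by
  obtain ⟨n, hn⟩ : ∃ n, ∑ i, α i = n := ⟨_, rfl⟩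
  induction n generalizing α with
  | zero =>
    have : α = 0 := by
      ext i
      simpa using (Finset.sum_eq_zero_iff.mp hn) i (Finset.mem_univ i)
    exact this ▸ h0
  | succ n ih =>
    obtain ⟨i, hi⟩ : ∃ i, α i ≠ 0 := by
      by_contra! h
      simp [h] at hn
    have hα : α - Pi.single i 1 + Pi.single i 1 = α := by
      ext j
      by_cases hj : j = i
      · subst hj
        simp
        omega
      · simp [hj]
    rw [← hα]
    refine hs _ _ (ih _ ?_)
    rw [← hα] at hn
    simpa [Finset.sum_add_distrib] using hn

/-- An intertwiner onto `H` has a nonzero entry at `(0, 0)`: otherwise its range, like the range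
of every `S i`, would be orthogonal to `e 0`. -/
lemma inner_zero_ne_zero (e : HilbertBasis (Fin m → ℕ) ℂ H) (T S : Fin m → H →L[ℂ] H)
    (lam mu : (Fin m → ℕ) → Fin m → ℂ) (hlam : ∀ α i, lam α i ≠ 0)
    (hT : ∀ (α : Fin m → ℕ) (i : Fin m), T i (e α) = lam α i • e (α + Pi.single i 1))
    (hS : ∀ (α : Fin m → ℕ) (i : Fin m), S i (e α) = mu α i • e (α + Pi.single i 1))
    (X : H ≃L[ℂ] H) (hX : ∀ (i : Fin m) (v : H), X (T i v) = S i (X v)) :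
    ⟪e 0, X (e 0)⟫_ℂ ≠ 0 := by
  intro h0
  have h : (innerSL ℂ (e 0)) ∘L (X : H →L[ℂ] H) = 0 := by
    refine ContinuousLinearMap.ext_on
      (Submodule.dense_iff_topologicalClosure_eq_top.mpr e.dense_span) ?_
    rintro _ ⟨β, rfl⟩
    induction β using multiIndex_induction with
    | h0 => simpa using h0
    | hs α i _ =>
      have h1 := shift_inner_zero e S mu hS i (X (e α))
      rw [← hX, hT, map_smul, inner_smul_right] at h1
      simpa [hlam] using h1
  have h2 := congrArg (fun f => f (X.symm (e 0))) h
  exact e.orthonormal.ne_zero 0 (by simpa using h2)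

lemma diag_entry_succ (e : HilbertBasis (Fin m → ℕ) ℂ H) (T S : Fin m → H →L[ℂ] H)
    (lam mu : (Fin m → ℕ) → Fin m → ℂ)
    (hT : ∀ (α : Fin m → ℕ) (i : Fin m), T i (e α) = lam α i • e (α + Pi.single i 1))
    (hS : ∀ (α : Fin m → ℕ) (i : Fin m), S i (e α) = mu α i • e (α + Pi.single i 1))
    (X : H ≃L[ℂ] H) (hX : ∀ (i : Fin m) (v : H), X (T i v) = S i (X v))
    (α : Fin m → ℕ) (i : Fin m) :
    ⟪e (α + Pi.single i 1), X (e (α + Pi.single i 1))⟫_ℂ * lam α i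
      = mu α i * ⟪e α, X (e α)⟫_ℂ := by
  have h1 := shift_inner_succ e S mu hS α i (X (e α))
  rw [← hX, hT, map_smul, inner_smul_right] at h1
  rw [← h1, mul_comm]

/-- Along a coordinate ray, the ratio of weight products telescopes in terms of a potential. -/
lemma prod_ratio_eq (lam mu : (Fin m → ℕ) → Fin m → ℂ)
    (hmu : ∀ α i, mu α i ≠ 0)
    (d : (Fin m → ℕ) → ℂ) (hd0 : ∀ α, d α ≠ 0)
    (hd : ∀ α i, d (α + Pi.single i 1) * lam α i = mu α i * d α)
    (i : Fin m) (α : Fin m → ℕ) (l : ℕ) :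
    (∏ k ∈ Finset.range l, lam (α + k • Pi.single i 1) i) /
      (∏ k ∈ Finset.range l, mu (α + k • Pi.single i 1) i)
      = d α / d (α + l • Pi.single i 1) := by
  rw [← Finset.prod_div_distrib]
  induction l with
  | zero => simp [hd0]
  | succ l ih =>
    rw [Finset.prod_range_succ, ih, succ_nsmul, ← add_assoc]
    have h := hd (α + l • Pi.single i 1) i
    rw [div_mul_div_comm, div_eq_div_iff (mul_ne_zero (hd0 _) (hmu _ _)) (hd0 _)]
    linear_combination d α * h

/-- The recursion `w (α + e_i) = lam α i * w α` has a nonvanishing solution: by commutativity the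
monomial `T ^ α` is well defined, and `w α` is read off from `T ^ α (e 0) = w α • e α`. -/
lemma exists_moment (e : HilbertBasis (Fin m → ℕ) ℂ H) (T : Fin m → H →L[ℂ] H)
    (hTcomm : ∀ i j, T i ∘L T j = T j ∘L T i)
    (lam : (Fin m → ℕ) → Fin m → ℂ) (hlam : ∀ α i, lam α i ≠ 0)
    (hT : ∀ (α : Fin m → ℕ) (i : Fin m), T i (e α) = lam α i • e (α + Pi.single i 1)) :
    ∃ w : (Fin m → ℕ) → ℂ, w 0 = 1 ∧ (∀ α, w α ≠ 0) ∧
      ∀ α i, w (α + Pi.single i 1) = lam α i * w α := by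
  have hc : Pairwise fun i j => ∀ x y : Multiplicative ℕ,
      Commute (powersHom (H →L[ℂ] H) (T i) x) (powersHom (H →L[ℂ] H) (T j) y) := by
    intro i j _ x y
    simp only [powersHom_apply]
    exact Commute.pow_pow (hTcomm i j) _ _
  -- `P α` is the monomial `T ^ α`, obtained from the monoid homomorphism `ℕ ^ m → (H →L[ℂ] H)`.
  let Q := MonoidHom.noncommPiCoprod (fun i => powersHom (H →L[ℂ] H) (T i)) hc
  let P : (Fin m → ℕ) → H →L[ℂ] H := fun α => Q fun i => Multiplicative.ofAdd (α i)
  have hP0 : P 0 = 1 := map_one Q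
  have hPs : ∀ α i, P (α + Pi.single i 1) = T i * P α := by
    intro α i
    have h1 : (fun j => Multiplicative.ofAdd ((α + Pi.single i 1 : Fin m → ℕ) j))
        = Pi.mulSingle i (Multiplicative.ofAdd 1) * fun j => Multiplicative.ofAdd (α j) := by
      ext j
      by_cases hj : j = i
      · subst hj
        simp [add_comm]
      · simp [hj]
    change Q _ = T i * Q _
    rw [h1, map_mul]
    congr 1
    simp [Q, MonoidHom.noncommPiCoprod_mulSingle]
  have hex : ∀ α, ∃ c : ℂ, c ≠ 0 ∧ P α (e 0) = c • e α := by
    intro α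
    induction α using multiIndex_induction with
    | h0 => exact ⟨1, one_ne_zero, by simp [hP0]⟩
    | hs α i ih =>
      obtain ⟨c, hc, h⟩ := ih
      refine ⟨c * lam α i, mul_ne_zero hc (hlam _ _), ?_⟩
      simp [hPs, h, hT, smul_smul]
  choose w hw0 hw using hex
  have hne : ∀ α, e α ≠ 0 := fun α => e.orthonormal.ne_zero α
  refine ⟨w, ?_, hw0, fun α i => ?_⟩
  · have h := hw 0
    rw [hP0] at h
    have h' : (1 : ℂ) • e 0 = w 0 • e 0 := by simpa using h
    exact (smul_left_injective ℂ (hne 0) h').symm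
  · have h := hw (α + Pi.single i 1)
    rw [hPs, mul_apply_eq_comp, hw, map_smul, hT, smul_smul] at h
    rw [mul_comm]
    exact (smul_left_injective ℂ (hne _) h).symm

/-- A multiplicative bound along coordinate rays gives a global bound, with one factor for each
coordinate. -/
lemma le_pow_of_ray_bound (r : (Fin m → ℕ) → ℝ) (A : ℝ) (hA : 0 ≤ A) (h0 : r 0 = 1)
    (hr : ∀ α i (n : ℕ), r (α + n • Pi.single i 1) ≤ A * r α) (α : Fin m → ℕ) :
    r α ≤ A ^ m := by
  have key : ∀ s : Finset (Fin m), r (∑ i ∈ s, α i • Pi.single i 1) ≤ A ^ s.card := by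
    intro s
    induction s using Finset.induction_on with
    | empty => simp [h0]
    | insert a s ha ih =>
      rw [Finset.sum_insert ha, Finset.card_insert_of_notMem ha, add_comm, pow_succ']
      exact (hr _ _ _).trans (mul_le_mul_of_nonneg_left ih hA)
  have h := key Finset.univ
  have hα : ∑ i, α i • (Pi.single i 1 : Fin m → ℕ) = α := by
    ext j
    simp [Finset.sum_apply, Pi.single_apply]
  rwa [hα, Finset.card_fin] at h

/-- A bounded family of scalars is the diagonal of a bounded operator. -/
lemma exists_diagonal {ι : Type*} (e : HilbertBasis ι ℂ H) (d : ι → ℂ) (B : ℝ)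
    (hB : ∀ α, ‖d α‖ ≤ B) :
    ∃ D : H →L[ℂ] H, ∀ α, D (e α) = d α • e α := by
  classical
  rcases isEmpty_or_nonempty ι with hι | ⟨⟨α₀⟩⟩
  · exact ⟨0, fun α => hι.elim α⟩
  have hB0 : 0 ≤ B := (norm_nonneg _).trans (hB α₀)
  have hle : ∀ (f : lp (fun _ : ι => ℂ) 2) (i : ι), ‖d i * f i‖ ≤ ‖((B : ℂ) • f) i‖ := by
    intro f i
    simp only [lp.coeFn_smul, Pi.smul_apply, norm_smul, norm_mul, Complex.norm_real,
      Real.norm_of_nonneg hB0]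
    exact mul_le_mul_of_nonneg_right (hB i) (norm_nonneg _)
  have hmem : ∀ f : lp (fun _ : ι => ℂ) 2, Memℓp (fun i => d i * f i) 2 := fun f =>
    (lp.memℓp ((B : ℂ) • f)).mono' (hle f)
  let L : lp (fun _ : ι => ℂ) 2 →ₗ[ℂ] lp (fun _ : ι => ℂ) 2 :=
    { toFun := fun f => ⟨fun i => d i * f i, hmem f⟩
      map_add' := fun f g => by
        ext i
        exact mul_add _ _ _
      map_smul' := fun c f => by
        ext i
        simp [mul_left_comm] }
  have hL : ∀ f, ‖L f‖ ≤ B * ‖f‖ := by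
    intro f
    have h : ‖L f‖ ≤ ‖(B : ℂ) • f‖ := lp.norm_mono (by norm_num) (hle f)
    rwa [norm_smul, Complex.norm_real, Real.norm_of_nonneg hB0] at h
  refine ⟨(e.repr.symm : _ →L[ℂ] H) ∘L (L.mkContinuous B hL) ∘L (e.repr : H →L[ℂ] _), fun α => ?_⟩
  apply e.repr.injective
  ext i
  simp [L, HilbertBasis.repr_self]
  by_cases hi : i = α
  · subst hi
    simp
  · simp [hi]

end Shifts

/-- Theorem 1.2 / 3.1 (multivariable Shields theorem, Kumar–Pilidi): two commuting
`m`-tuples of unilateral weighted shifts with nonzero weights are similar if and only if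
all ratios of products of weights along coordinate directions are bounded above and below
by positive constants. -/
theorem stmt_0 (m : ℕ) (hm : 1 ≤ m)
    {H : Type*} [NormedAddCommGroup H] [InnerProductSpace ℂ H] [CompleteSpace H]
    (e : HilbertBasis (Fin m → ℕ) ℂ H)
    (T S : Fin m → H →L[ℂ] H)
    (hTcomm : ∀ i j, T i ∘L T j = T j ∘L T i)
    (hScomm : ∀ i j, S i ∘L S j = S j ∘L S i)
    (lam mu : (Fin m → ℕ) → Fin m → ℂ)
    (hlam : ∀ α i, lam α i ≠ 0) (hmu : ∀ α i, mu α i ≠ 0)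
    (hT : ∀ (α : Fin m → ℕ) (i : Fin m), T i (e α) = lam α i • e (α + Pi.single i 1))
    (hS : ∀ (α : Fin m → ℕ) (i : Fin m), S i (e α) = mu α i • e (α + Pi.single i 1)) :
    (∃ X : H ≃L[ℂ] H, ∀ (i : Fin m) (v : H), X (T i v) = S i (X v)) ↔
      ∃ C₁ C₂ : ℝ, 0 < C₁ ∧ 0 < C₂ ∧
        ∀ (i : Fin m) (α : Fin m → ℕ) (l : ℕ),
          C₁ ≤ ‖(∏ k ∈ Finset.range (l + 1), lam (α + k • Pi.single i 1) i) /
                (∏ k ∈ Finset.range (l + 1), mu (α + k • Pi.single i 1) i)‖ ∧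
          ‖(∏ k ∈ Finset.range (l + 1), lam (α + k • Pi.single i 1) i) /
                (∏ k ∈ Finset.range (l + 1), mu (α + k • Pi.single i 1) i)‖ ≤ C₂ := by
  constructor
  · rintro ⟨X, hX⟩
    have hX' : ∀ (i : Fin m) (v : H), X.symm (S i v) = T i (X.symm v) := by
      intro i v
      apply X.injective
      simp [hX]
    set x : (Fin m → ℕ) → ℂ := fun α => inner ℂ (e α) (X (e α)) with hx
    set y : (Fin m → ℕ) → ℂ := fun α => inner ℂ (e α) (X.symm (e α)) with hy
    have hx0 : x 0 ≠ 0 := inner_zero_ne_zero e T S lam mu hlam hT hS X hX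
    have hy0 : y 0 ≠ 0 := inner_zero_ne_zero e S T mu lam hmu hS hT X.symm hX'
    have hxs : ∀ α i, x (α + Pi.single i 1) * lam α i = mu α i * x α :=
      diag_entry_succ e T S lam mu hT hS X hX
    have hys : ∀ α i, y (α + Pi.single i 1) * mu α i = lam α i * y α :=
      diag_entry_succ e S T mu lam hS hT X.symm hX'
    have hxy : ∀ α, x α * y α = x 0 * y 0 := by
      intro α
      induction α using multiIndex_induction with
      | h0 => rfl
      | hs α i ih =>
        rw [← ih]
        apply mul_right_cancel₀ (mul_ne_zero (hlam α i) (hmu α i))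
        linear_combination (y (α + Pi.single i 1) * mu α i) * hxs α i + mu α i * x α * hys α i
    have hxne : ∀ α, x α ≠ 0 := fun α h =>
      mul_ne_zero hx0 hy0 (by rw [← hxy α, h, zero_mul])
    have hbound : ∀ (Z : H →L[ℂ] H) α, ‖inner ℂ (e α) (Z (e α))‖ ≤ ‖Z‖ := by
      intro Z α
      refine (norm_inner_le_norm _ _).trans ?_
      have h1 := e.orthonormal.norm_eq_one α
      have h2 := Z.le_opNorm (e α)
      rw [h1, mul_one] at h2
      rwa [h1, one_mul]
    have hxb : ∀ α, ‖x α‖ ≤ ‖(X : H →L[ℂ] H)‖ := fun α => hbound (X : H →L[ℂ] H) α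
    have hyb : ∀ α, ‖y α‖ ≤ ‖(X.symm : H →L[ℂ] H)‖ := fun α => hbound (X.symm : H →L[ℂ] H) α
    set M := ‖(X : H →L[ℂ] H)‖
    set N := ‖(X.symm : H →L[ℂ] H)‖
    have hM : 0 < M := (norm_pos_iff.mpr hx0).trans_le (hxb 0)
    have hN : 0 < N := (norm_pos_iff.mpr hy0).trans_le (hyb 0)
    set c := ‖x 0 * y 0‖
    have hc : 0 < c := norm_pos_iff.mpr (mul_ne_zero hx0 hy0)
    have hxl : ∀ α, c / N ≤ ‖x α‖ := by
      intro α
      rw [div_le_iff₀ hN]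
      calc c = ‖x α‖ * ‖y α‖ := by rw [← norm_mul, hxy]
        _ ≤ ‖x α‖ * N := mul_le_mul_of_nonneg_left (hyb α) (norm_nonneg _)
    refine ⟨c / N / M, M / (c / N), by positivity, by positivity, fun i α l => ?_⟩
    rw [prod_ratio_eq lam mu hmu x hxne hxs, norm_div]
    have hp := norm_pos_iff.mpr (hxne (α + (l + 1) • Pi.single i 1))
    exact ⟨div_le_div₀ (norm_nonneg _) (hxl _) hp (hxb _),
      div_le_div₀ hM.le (hxb _) (by positivity) (hxl _)⟩
  · rintro ⟨C₁, C₂, hC₁, hC₂, hC⟩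
    obtain ⟨w, hw1, hw0, hw⟩ := exists_moment e T hTcomm lam hlam hT
    obtain ⟨v, hv1, hv0, hv⟩ := exists_moment e S hScomm mu hmu hS
    set d : (Fin m → ℕ) → ℂ := fun α => v α / w α with hd
    have hd1 : d 0 = 1 := by simp [hd, hw1, hv1]
    have hdne : ∀ α, d α ≠ 0 := fun α => div_ne_zero (hv0 α) (hw0 α)
    have hds : ∀ α i, d (α + Pi.single i 1) * lam α i = mu α i * d α := by
      intro α i
      simp only [hd, hw, hv]
      have := hlam α i
      have := hw0 α
      field_simp
    -- The bound must also cover the trivial ray of length `0`, hence the `1` in the maximum.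
    set A : ℝ := max 1 (max C₂ C₁⁻¹) with hA
    have hA1 : 1 ≤ A := le_max_left _ _
    have hAC₂ : C₂ ≤ A := (le_max_left _ _).trans (le_max_right _ _)
    have hAC₁ : C₁⁻¹ ≤ A := (le_max_right _ _).trans (le_max_right _ _)
    have hray : ∀ α i (n : ℕ), ‖d (α + n • Pi.single i 1)‖ ≤ A * ‖d α‖ ∧
        ‖d α‖ ≤ A * ‖d (α + n • Pi.single i 1)‖ := by
      intro α i n
      rcases n with _ | l
      · have := le_mul_of_one_le_left (norm_nonneg (d α)) hA1
        simpa using this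
      · have h := hC i α l
        rw [prod_ratio_eq lam mu hmu d hdne hds, norm_div] at h
        have hp := norm_pos_iff.mpr (hdne (α + (l + 1) • Pi.single i 1))
        rw [le_div_iff₀ hp, div_le_iff₀ hp] at h
        refine ⟨?_, h.2.trans (mul_le_mul_of_nonneg_right hAC₂ hp.le)⟩
        refine le_trans ?_ (mul_le_mul_of_nonneg_right hAC₁ (norm_nonneg _))
        rw [inv_mul_eq_div, le_div_iff₀ hC₁, mul_comm]
        exact h.1
    have hA0 : 0 ≤ A := zero_le_one.trans hA1
    have hub : ∀ α, ‖d α‖ ≤ A ^ m :=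
      le_pow_of_ray_bound (fun α => ‖d α‖) A hA0 (by simp [hd1]) fun α i n => (hray α i n).1
    have hlb : ∀ α, ‖(d α)⁻¹‖ ≤ A ^ m := by
      refine le_pow_of_ray_bound (fun α => ‖(d α)⁻¹‖) A hA0 (by simp [hd1]) fun α i n => ?_
      have hp := norm_pos_iff.mpr (hdne (α + n • Pi.single i 1))
      have hq := norm_pos_iff.mpr (hdne α)
      simp only [norm_inv]
      rw [← div_eq_mul_inv, le_div_iff₀ hq, inv_mul_eq_div, div_le_iff₀ hp]
      exact (hray α i n).2
    obtain ⟨D, hD⟩ := exists_diagonal e d _ hub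
    obtain ⟨E, hE⟩ := exists_diagonal e (fun α => (d α)⁻¹) _ hlb
    have hdense := Submodule.dense_iff_topologicalClosure_eq_top.mpr e.dense_span
    have hDE : D ∘L E = ContinuousLinearMap.id ℂ H := by
      refine ContinuousLinearMap.ext_on hdense ?_
      rintro _ ⟨α, rfl⟩
      simp [hD, hE, smul_smul, hdne]
    have hED : E ∘L D = ContinuousLinearMap.id ℂ H := by
      refine ContinuousLinearMap.ext_on hdense ?_
      rintro _ ⟨α, rfl⟩
      simp [hD, hE, smul_smul, hdne]
    refine ⟨ContinuousLinearEquiv.equivOfInverse D E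
      (fun u => by simpa using congrArg (fun f => f u) hED)
      (fun u => by simpa using congrArg (fun f => f u) hDE), fun i u => ?_⟩
    have hint : D ∘L T i = S i ∘L D := by
      refine ContinuousLinearMap.ext_on hdense ?_
      rintro _ ⟨α, rfl⟩
      simp only [ContinuousLinearMap.comp_apply, hT, hD, hS, map_smul, smul_smul]
      rw [mul_comm, hds, mul_comm]
    exact congrArg (fun f => f u) hint
end

section
/- Let n ≥ 2 be an integer and let k be an integer with 2 ≤ k ≤ n. Then Σ_{i=0}^{k} (−1)^i · i · C(n−2+i, i) · C(n, k−i) = 0. -/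
/-!
Absorption, `i * C(n-2+i, i) = (n-1) * C(n-1+(i-1), i-1)`, turns the sum into `-(n-1)` times
`∑ j ≤ k-1, (-1)^j * C(n-1+j, j) * C(n, k-1-j)`. Since `(-1)^j * C(n-1+j, j) = C(-n, j)`, the
Chu–Vandermonde identity evaluates the latter sum as `C(-n + n, k-1) = C(0, k-1)`, which vanishes
because `k - 1 > 0`.
-/

/-- Chu–Vandermonde for the upper arguments `-(p+1)` and `p+1`; equivalently, the coefficient of
`x^m` in `(1+x)^(-(p+1)) * (1+x)^(p+1) = 1` vanishes for `m > 0`. -/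
lemma sum_neg_one_pow_choose_mul_choose (p m : ℕ) (hm : 0 < m) :
    ∑ j ∈ Finset.range (m + 1),
      (-1 : ℤ) ^ j * (Nat.choose (p + j) j : ℤ) * (Nat.choose (p + 1) (m - j) : ℤ) = 0 := by
  have h := Ring.add_choose_eq m (Commute.all (-((p + 1 : ℕ) : ℤ)) ((p + 1 : ℕ) : ℤ))
  rw [neg_add_cancel, Ring.choose_zero_pos ℤ hm,
    Finset.Nat.sum_antidiagonal_eq_sum_range_succ_mk] at h
  rw [h]
  refine Finset.sum_congr rfl fun j _ => ?_
  have e : ((p + 1 : ℕ) : ℤ) + j - 1 = ((p + j : ℕ) : ℤ) := by push_cast; ring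
  simp only [Ring.choose_neg, e, Ring.choose_natCast, Int.negOnePow_def, Units.smul_def]
  simp

/-- Lemma 4.1(1), second identity: for integers `n ≥ 2` and `2 ≤ k ≤ n`,
`Σ_{i=0}^{k} (−1)^i · i · C(n−2+i, i) · C(n, k−i) = 0`. -/
theorem stmt_3 (n k : ℕ) (hn : 2 ≤ n) (hk2 : 2 ≤ k) (hkn : k ≤ n) :
    (∑ i ∈ Finset.range (k + 1),
      (-1 : ℤ) ^ i * (i : ℤ) * (Nat.choose (n - 2 + i) i : ℤ) * (Nat.choose n (k - i) : ℤ)) = 0 := by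
  obtain ⟨q, rfl⟩ := Nat.exists_eq_add_of_le' hn
  obtain ⟨m, rfl⟩ := Nat.exists_eq_add_of_le' (show 1 ≤ k by omega)
  have h := sum_neg_one_pow_choose_mul_choose (q + 1) m (by omega)
  rw [Finset.sum_range_succ']
  simp only [Nat.cast_zero, mul_zero, zero_mul, add_zero, Nat.add_sub_cancel]
  rw [← mul_zero (-((q : ℤ) + 1)), ← h, Finset.mul_sum]
  refine Finset.sum_congr rfl fun j _ => ?_
  have absorb : ((j : ℤ) + 1) * (Nat.choose (q + (j + 1)) (j + 1) : ℤ)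
      = (q + 1) * (Nat.choose (q + 1 + j) j : ℤ) := by
    have := Nat.choose_succ_right_eq (q + 1 + j) j
    rw [show q + 1 + j - j = q + 1 by omega] at this
    rw [show q + (j + 1) = q + 1 + j by omega]
    zify at this
    linarith
  rw [show m + 1 - (j + 1) = m - j by omega, pow_succ]
  push_cast
  linear_combination (-(-1 : ℤ) ^ j * (Nat.choose (q + 2) (m - j) : ℤ)) * absorb
end

section
/- Let n ≥ 2 be an integer and let l be an integer with l > n. Then Σ_{i=l−n}^{l} (−1)^i · i · C(n−2+i, i) · C(n, l−i) = 0. -/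
/-!
Since `i * C(n-2+i, i) = (n-1) * C(n-2+i, n-1)`, the substitution `i = (l-n) + j` turns the sum,
up to sign, into `n-1` times the `n`-th forward difference of `x ↦ C(x, n-1)` at `x = l-2`. That
function is a polynomial of degree `n-1`, so its `n`-th difference vanishes
(`fwdDiff_iter_choose_eq_zero`).
-/

lemma fwdDiff_iter_choose_eq_zero (k : ℕ) :
    (fwdDiff 1)^[k + 1] (fun x ↦ x.choose k : ℕ → ℤ) = fun _ ↦ 0 := by
  have h := fwdDiff_iter_choose 0 k
  rw [add_zero] at h
  rw [Function.iterate_succ_apply', h]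
  simp

lemma mul_choose_add_self (m i : ℕ) :
    (i : ℤ) * ((m + i).choose i : ℤ) = (m + 1) * ((m + i).choose (m + 1) : ℤ) := by
  have h := Nat.choose_succ_right_eq (m + i) m
  rw [Nat.add_sub_cancel_left, Nat.choose_symm_add] at h
  zify at h
  linarith

/-- Lemma 4.1(2), second identity: for integers `n ≥ 2` and `l > n`,
`Σ_{i=l−n}^{l} (−1)^i · i · C(n−2+i, i) · C(n, l−i) = 0`. -/
theorem stmt_5 (n l : ℕ) (hn : 2 ≤ n) (hl : n < l) :
    (∑ i ∈ Finset.Icc (l - n) l,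
      (-1 : ℤ) ^ i * (i : ℤ) * (Nat.choose (n - 2 + i) i : ℤ) * (Nat.choose n (l - i) : ℤ)) = 0 := by
  obtain ⟨m, rfl⟩ := Nat.exists_eq_add_of_le' hn
  obtain ⟨d, rfl⟩ := Nat.exists_eq_add_of_le hl.le
  have key := congrFun (fwdDiff_iter_choose_eq_zero (m + 1)) (m + d)
  rw [fwdDiff_iter_eq_sum_shift] at key
  rw [Nat.add_sub_cancel_left, Nat.add_sub_cancel, ← Finset.Ico_add_one_right_eq_Icc,
    Finset.sum_Ico_eq_sum_range, show m + 2 + d + 1 - d = m + 1 + 1 + 1 by omega]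
  -- The global sign `(-1) ^ (d + n)` converts `(-1) ^ (n - j)` into `(-1) ^ (d + j)`.
  rw [← mul_zero ((-1 : ℤ) ^ (d + (m + 2)) * (m + 1)), ← key, Finset.mul_sum]
  refine Finset.sum_congr rfl fun j hj ↦ ?_
  obtain ⟨t, ht⟩ : ∃ t, m + 2 = j + t :=
    Nat.exists_eq_add_of_le (by have := Finset.mem_range.mp hj; omega)
  have hsign : (-1 : ℤ) ^ (d + (m + 2)) * (-1) ^ (m + 1 + 1 - j) = (-1) ^ (d + j) := by
    rw [show m + 1 + 1 - j = t by omega, ht, ← pow_add,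
      show d + (j + t) + t = d + j + 2 * t by ring, pow_add _ (d + j), pow_mul]
    simp
  have hsymm : (m + 2).choose (m + 2 + d - (d + j)) = (m + 1 + 1).choose j := by
    rw [show m + 2 + d - (d + j) = m + 2 - j by omega, Nat.choose_symm (by omega)]
  rw [mul_assoc ((-1 : ℤ) ^ (d + j)), mul_choose_add_self, hsymm, ← hsign,
    show m + d + j • 1 = m + (d + j) by simp [add_assoc], smul_eq_mul]
  ring
end

section
/- Let m ≥ 2 and n ≥ 1 be integers, let ρ : ℕ^m → (0,∞), and let T = (T_1,…,T_m) be the associated m-tuple of backward weighted shifts on H. If T is n-hypercontractive, then for every nonzero multi-index α ∈ ℕ^m one has Σ_{i : α_i ≥ 1} ρ(α−e_i)/ρ(α) ≤ |α|/(|α|+n−1). -/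
/-!
Let `F = ∑ ρ(α) X^α` be the formal power series whose coefficients are the weights, and put
`s = X_1 + ⋯ + X_m`. Since `T^β e_α = √(ρ(α-β)/ρ(α)) e_{α-β}` when `β ≤ α`, and `0` otherwise
(`ShiftsBy.tuplePow`), the multinomial theorem gives (`coeff_one_sub_pow_mul`,
`inner_deltaOp`)

  `⟨Δ_T^{(k)} e_α, e_α⟩ = [X^α] ((1 - s)^k F) / ρ(α)`,

so `n`-hypercontractivity makes all coefficients of `(1 - s)^n F` nonnegative. The claim is
`(|α| + n - 1) [X^α](s F) ≤ |α| [X^α] F`, and it holds for every series `F` for which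
`(1 - s)^n F` has nonnegative coefficients (`coeff_sum_X_mul_le`). For `n = 1` it
is immediate. To pass from `n` to `n + 1`, put `h = (1 - s) F`, to which the case `n` applies; the
claim for `F` reads `n [X^α](s F) ≤ |α| [X^α] h`, and induction on `|α|` bounds `n [X^γ] F` by
`(|α| + n - 1) [X^γ] h` for each `γ = α - e_i`. Summing over `i` and using the case `n` for `h`
finishes the step.
-/

open scoped BigOperators

/-- `T^β = T_1^{β_1} ∘ ⋯ ∘ T_m^{β_m}` for an `m`-tuple of operators. -/
noncomputable def tuplePow {m : ℕ} {H : Type*} [NormedAddCommGroup H]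
    [InnerProductSpace ℂ H] (T : Fin m → H →L[ℂ] H) (β : Fin m → ℕ) : H →L[ℂ] H :=
  (List.ofFn fun i => (T i) ^ (β i)).prod

/-- The defect operator
`Δ_T^{(k)} = Σ_{β ∈ ℕ^m, |β| ≤ k} (−1)^{|β|}·(k!/(β!·(k−|β|)!))·(T^β)*T^β`. -/
noncomputable def deltaOp {m : ℕ} {H : Type*} [NormedAddCommGroup H]
    [InnerProductSpace ℂ H] [CompleteSpace H]
    (T : Fin m → H →L[ℂ] H) (k : ℕ) : H →L[ℂ] H :=
  ∑ β ∈ (Finset.Iic (fun _ => k : Fin m → ℕ)).filter (fun β => ∑ i, β i ≤ k),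
    ((((-1 : ℝ) ^ (∑ i, β i) *
        ((k.factorial : ℝ) /
          (((∏ i, (β i).factorial : ℕ) : ℝ) * ((k - ∑ i, β i).factorial : ℝ))) : ℝ)) : ℂ) •
      (ContinuousLinearMap.adjoint (tuplePow T β) ∘L tuplePow T β)

/-- `T` is `n`-hypercontractive if `Δ_T^{(k)} ≥ 0` for all `1 ≤ k ≤ n`. -/
def IsNHypercontractive {m : ℕ} {H : Type*} [NormedAddCommGroup H]
    [InnerProductSpace ℂ H] [CompleteSpace H]
    (T : Fin m → H →L[ℂ] H) (n : ℕ) : Prop :=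
  ∀ k : ℕ, 1 ≤ k → k ≤ n → (deltaOp T k).IsPositive

/-! ### The inequality for formal power series -/

open MvPowerSeries in
/-- Multiplication by `X_1 + ⋯ + X_m` acts on coefficients by summing over the predecessors of the
multi-index. -/
theorem coeff_sum_X_mul {m : ℕ} (F : MvPowerSeries (Fin m) ℝ) (d : Fin m →₀ ℕ) :
    coeff d ((∑ i, X i) * F) =
      ∑ i ∈ Finset.univ.filter (fun i : Fin m => 1 ≤ d i), coeff (d - Finsupp.single i 1) F := by
  rw [Finset.sum_mul, map_sum, Finset.sum_filter]
  refine Finset.sum_congr rfl fun i _ => ?_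
  rw [X_def, coeff_monomial_mul]
  simp

open MvPowerSeries in
/-- The combinatorial core: if all coefficients of `(1 - s)^(n+1) F` are nonnegative, where
`s = X_1 + ⋯ + X_m`, then `(|d| + n) [X^d](s F) ≤ |d| [X^d] F`. -/
theorem coeff_sum_X_mul_le {m : ℕ} (n : ℕ) :
    ∀ F : MvPowerSeries (Fin m) ℝ,
      (∀ d, 0 ≤ coeff d ((1 - ∑ i, X i) ^ (n + 1) * F)) →
      ∀ d : Fin m →₀ ℕ, ((∑ i, d i : ℕ) + n : ℝ) * coeff d ((∑ i, X i) * F) ≤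
        ((∑ i, d i : ℕ) : ℝ) * coeff d F := by
  induction n with
  | zero =>
    intro F hF d
    have h := hF d
    rw [zero_add, pow_one, sub_mul, one_mul, map_sub] at h
    simp only [Nat.cast_zero, add_zero]
    exact mul_le_mul_of_nonneg_left (by linarith) (Nat.cast_nonneg _)
  | succ n ih =>
    intro F hF
    set h : MvPowerSeries (Fin m) ℝ := (1 - ∑ i, X i) * F with hh
    have ih' := ih h (fun d => by
      have := hF d
      rwa [pow_succ, mul_assoc] at this)
    have hF_eq : ∀ d, coeff d F = coeff d ((∑ i, X i) * F) + coeff d h := by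
      intro d
      rw [hh, sub_mul, one_mul, map_sub]
      ring
    have key : ∀ (N : ℕ) (d : Fin m →₀ ℕ), ∑ i, d i = N →
        (n + 1 : ℝ) * coeff d ((∑ i, X i) * F) ≤ N * coeff d h := by
      intro N
      induction N with
      | zero =>
        intro d hd
        have hd0 : ∀ i, d i = 0 := by simpa using hd
        rw [coeff_sum_X_mul]
        simp [hd0]
      | succ N ihN =>
        intro d hd
        have hstep : (n + 1 : ℝ) * coeff d ((∑ i, X i) * F) ≤
            (N + 1 + n : ℝ) * coeff d ((∑ i, X i) * h) := by
          rw [coeff_sum_X_mul, coeff_sum_X_mul, Finset.mul_sum, Finset.mul_sum]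
          refine Finset.sum_le_sum fun i hi => ?_
          have hi1 : 1 ≤ d i := by simpa using hi
          have hle : Finsupp.single i 1 ≤ d := by simpa using hi1
          have hdeg : ∑ j, (d - Finsupp.single i 1 : Fin m →₀ ℕ) j = N := by
            have h1 : ∑ j, ((d - Finsupp.single i 1 : Fin m →₀ ℕ) j + Finsupp.single i 1 j) = N + 1 := by
              rw [← hd]
              refine Finset.sum_congr rfl fun j _ => ?_
              rw [← Finsupp.add_apply, tsub_add_cancel_of_le hle]
            rw [Finset.sum_add_distrib] at h1
            simpa [Finsupp.single_apply] using h1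
          have h2 := ihN _ hdeg
          rw [hF_eq]
          linarith
        have h3 := ih' d
        rw [hd] at h3
        push_cast at h3 ⊢
        linarith
    intro d
    have := key _ d rfl
    rw [hF_eq d]
    push_cast at this ⊢
    linarith

/-! ### The multinomial expansion of `(1 - s)^k` -/

open MvPowerSeries in
/-- The multinomial theorem for `(1 - s)^k`, `s = X_1 + ⋯ + X_m`, indexed as in `deltaOp`. -/
theorem one_sub_sum_X_pow {m : ℕ} (k : ℕ) :
    (1 - ∑ i, X i : MvPowerSeries (Fin m) ℝ) ^ k =
      ∑ β ∈ (Finset.Iic (fun _ => k : Fin m → ℕ)).filter (fun β => ∑ i, β i ≤ k),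
        monomial (Finsupp.equivFunOnFinite.symm β) ((-1 : ℝ) ^ (∑ i, β i) *
        ((k.factorial : ℝ) /
          (((∏ i, (β i).factorial : ℕ) : ℝ) * ((k - ∑ i, β i).factorial : ℝ)))) := by
  have h0 : (1 - ∑ i, X i : MvPowerSeries (Fin m) ℝ) =
      ∑ j : Fin (m + 1), (Fin.cons 1 (fun i => - X i) : Fin (m + 1) → MvPowerSeries (Fin m) ℝ) j := by
    rw [Fin.sum_univ_succ]
    simp [sub_eq_add_neg]
  rw [h0, Finset.sum_pow_eq_sum_piAntidiag]
  -- The exponent of the summand `1` is determined by the others: drop it with `Fin.tail`.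
  refine Finset.sum_bij' (fun κ _ => Fin.tail κ)
    (fun β _ => (Fin.cons (k - ∑ i, β i) β : Fin (m + 1) → ℕ)) ?_ ?_ ?_ ?_ ?_
  · intro κ hκ
    have hs : κ 0 + ∑ i : Fin m, κ i.succ = k := by
      simpa [Fin.sum_univ_succ] using hκ
    have hs' : ∑ i, Fin.tail κ i ≤ k := by
      simp only [Fin.tail]
      omega
    simp only [Finset.mem_filter, Finset.mem_Iic]
    exact ⟨fun i => (Finset.single_le_sum (f := Fin.tail κ) (fun _ _ => Nat.zero_le _)
      (Finset.mem_univ i)).trans hs', hs'⟩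
  · intro β hβ
    have := (Finset.mem_filter.1 hβ).2
    simp [Fin.sum_univ_succ, this]
  · intro κ hκ
    have hs : κ 0 + ∑ i : Fin m, κ i.succ = k := by
      simpa [Fin.sum_univ_succ] using hκ
    have : k - ∑ i, Fin.tail κ i = κ 0 := by
      simp only [Fin.tail]
      omega
    simp only [this, Fin.cons_self_tail]
  · intro β _
    simp
  · intro κ hκ
    have hs : κ 0 + ∑ i : Fin m, κ i.succ = k := by
      simpa [Fin.sum_univ_succ] using hκ
    have hk : k - ∑ i, Fin.tail κ i = κ 0 := by
      simp only [Fin.tail]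
      omega
    have hmult := Nat.multinomial_spec Finset.univ κ
    rw [Fin.prod_univ_succ, Fin.sum_univ_succ, hs] at hmult
    have hm' : (Nat.multinomial Finset.univ κ : ℝ) = (k.factorial : ℝ) /
        (((∏ i, (Fin.tail κ i).factorial : ℕ) : ℝ) * ((κ 0).factorial : ℝ)) := by
      rw [eq_div_iff (by positivity), ← hmult]
      simp only [Fin.tail]
      push_cast
      ring
    have hmon : ∀ β : Fin m → ℕ, ∏ i, (X i : MvPowerSeries (Fin m) ℝ) ^ β i =
        monomial (Finsupp.equivFunOnFinite.symm β) 1 := by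
      intro β
      rw [monomial_eq', map_one, one_mul, Finsupp.prod_fintype _ _ (by simp)]
      simp
    have hprod : ∏ j, (Fin.cons 1 (fun i => - X i) : Fin (m + 1) → MvPowerSeries (Fin m) ℝ) j ^ κ j
        = C ((-1 : ℝ) ^ (∑ i, Fin.tail κ i)) *
          monomial (Finsupp.equivFunOnFinite.symm (Fin.tail κ)) 1 := by
      rw [Fin.prod_univ_succ, ← hmon, ← Finset.prod_pow_eq_pow_sum, map_prod,
        ← Finset.prod_mul_distrib]
      simp only [Fin.cons_zero, one_pow, one_mul, Fin.cons_succ]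
      refine Finset.prod_congr rfl fun i _ => ?_
      rw [neg_pow]
      simp [Fin.tail]
    rw [hprod, hk, ← hm', ← map_natCast (C (σ := Fin m) (R := ℝ)), ← mul_assoc, ← map_mul,
      ← smul_eq_C_mul, ← map_smul, smul_eq_mul, mul_one, mul_comm]

/-- The formal power series `∑ ρ(α) X^α` whose coefficients are the weights. -/
def weightSeries {m : ℕ} (ρ : (Fin m → ℕ) → ℝ) : MvPowerSeries (Fin m) ℝ := fun d => ρ d

theorem coeff_weightSeries {m : ℕ} (ρ : (Fin m → ℕ) → ℝ) (d : Fin m →₀ ℕ) :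
    MvPowerSeries.coeff d (weightSeries ρ) = ρ d := rfl

open MvPowerSeries Classical in
theorem coeff_one_sub_pow_mul {m : ℕ} (k : ℕ) (ρ : (Fin m → ℕ) → ℝ) (α : Fin m → ℕ) :
    coeff (Finsupp.equivFunOnFinite.symm α)
      ((1 - ∑ i, X i) ^ k * weightSeries ρ) =
      ∑ β ∈ (Finset.Iic (fun _ => k : Fin m → ℕ)).filter (fun β => ∑ i, β i ≤ k),
        ((-1 : ℝ) ^ (∑ i, β i) *
        ((k.factorial : ℝ) /
          (((∏ i, (β i).factorial : ℕ) : ℝ) * ((k - ∑ i, β i).factorial : ℝ)))) *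
          (if β ≤ α then ρ (α - β) else 0) := by
  rw [one_sub_sum_X_pow, Finset.sum_mul, map_sum]
  refine Finset.sum_congr rfl fun β _ => ?_
  rw [coeff_monomial_mul, mul_ite, mul_zero, coeff_weightSeries]
  congr 1

/-! ### Powers of backward weighted shifts and the defect operators -/

open Classical in
/-- `A` acts on the basis `e` as the `δ`-th power of the tuple of backward weighted shifts with
weights `ρ`. -/
def ShiftsBy {m : ℕ} {H : Type*} [NormedAddCommGroup H] [InnerProductSpace ℂ H]
    (e : HilbertBasis (Fin m → ℕ) ℂ H) (ρ : (Fin m → ℕ) → ℝ) (A : H →L[ℂ] H)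
    (δ : Fin m → ℕ) : Prop :=
  ∀ α, A (e α) = if δ ≤ α then (Real.sqrt (ρ (α - δ) / ρ α) : ℂ) • e (α - δ) else 0

section ShiftsBy

variable {m : ℕ} {H : Type*} [NormedAddCommGroup H] [InnerProductSpace ℂ H]
  {e : HilbertBasis (Fin m → ℕ) ℂ H} {ρ : (Fin m → ℕ) → ℝ}

theorem ShiftsBy.one (hρ : ∀ α, 0 < ρ α) : ShiftsBy e ρ 1 0 := by
  intro α
  have h0 : (0 : Fin m → ℕ) ≤ α := fun i => Nat.zero_le _
  rw [if_pos h0, tsub_zero, div_self (hρ α).ne']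
  simp

theorem ShiftsBy.mul (hρ : ∀ α, 0 < ρ α) {A B : H →L[ℂ] H} {δ δ' : Fin m → ℕ}
    (hA : ShiftsBy e ρ A δ) (hB : ShiftsBy e ρ B δ') : ShiftsBy e ρ (A * B) (δ + δ') := by
  intro α
  rw [mul_apply_eq_comp, hB α]
  by_cases h' : δ' ≤ α
  · rw [if_pos h', map_smul, hA]
    have hiff : δ ≤ α - δ' ↔ δ + δ' ≤ α := le_tsub_iff_right h'
    by_cases h : δ ≤ α - δ'
    · rw [if_pos h, if_pos (hiff.1 h), smul_smul, ← Complex.ofReal_mul,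
        ← Real.sqrt_mul (div_pos (hρ _) (hρ _)).le, tsub_tsub, add_comm δ' δ]
      congr 3
      have := (hρ (α - δ')).ne'
      field_simp
    · rw [if_neg h, if_neg (fun h2 => h (hiff.2 h2)), smul_zero]
  · rw [if_neg h', map_zero, if_neg (fun h2 => h' (le_trans le_add_self h2))]

theorem ShiftsBy.pow (hρ : ∀ α, 0 < ρ α) {A : H →L[ℂ] H} {δ : Fin m → ℕ}
    (hA : ShiftsBy e ρ A δ) (b : ℕ) : ShiftsBy e ρ (A ^ b) (b • δ) := by
  induction b with
  | zero => simpa using ShiftsBy.one hρ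
  | succ b ih =>
    rw [pow_succ, succ_nsmul]
    exact ih.mul hρ hA

theorem ShiftsBy.list_prod (hρ : ∀ α, 0 < ρ α) {ι : Type*} (A : ι → H →L[ℂ] H)
    (δ : ι → Fin m → ℕ) (h : ∀ i, ShiftsBy e ρ (A i) (δ i)) (l : List ι) :
    ShiftsBy e ρ (l.map A).prod (l.map δ).sum := by
  induction l with
  | nil => simpa using ShiftsBy.one hρ
  | cons i l ih => simpa using (h i).mul hρ ih

theorem ShiftsBy.tuplePow (hρ : ∀ α, 0 < ρ α) {T : Fin m → H →L[ℂ] H}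
    (hT : ∀ i, ShiftsBy e ρ (T i) (Pi.single i 1)) (β : Fin m → ℕ) :
    ShiftsBy e ρ (tuplePow T β) β := by
  have h := ShiftsBy.list_prod hρ _ _ (fun i => (hT i).pow hρ (β i)) (List.finRange m)
  rw [← List.ofFn_eq_map, ← List.ofFn_eq_map, List.sum_ofFn] at h
  have hβ : ∑ i, β i • (Pi.single i 1 : Fin m → ℕ) = β := by
    ext j
    simp [Finset.sum_apply, Pi.single_apply]
  rwa [hβ] at h

open Classical in
theorem ShiftsBy.norm_sq (hρ : ∀ α, 0 < ρ α) {A : H →L[ℂ] H} {δ : Fin m → ℕ}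
    (hA : ShiftsBy e ρ A δ) (α : Fin m → ℕ) :
    ‖A (e α)‖ ^ 2 = (if δ ≤ α then ρ (α - δ) else 0) / ρ α := by
  rw [hA α]
  split_ifs
  · rw [norm_smul, e.orthonormal.1, mul_one, Complex.norm_real, Real.norm_eq_abs, sq_abs,
      Real.sq_sqrt (div_pos (hρ _) (hρ _)).le]
  · simp

theorem inner_deltaOp [CompleteSpace H] (hρ : ∀ α, 0 < ρ α) {T : Fin m → H →L[ℂ] H}
    (hT : ∀ i, ShiftsBy e ρ (T i) (Pi.single i 1)) (k : ℕ) (α : Fin m → ℕ) :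
    inner ℂ (e α) (deltaOp T k (e α)) = ((MvPowerSeries.coeff (Finsupp.equivFunOnFinite.symm α)
      ((1 - ∑ i, MvPowerSeries.X i) ^ k * weightSeries ρ) / ρ α : ℝ) : ℂ)
      := by
  rw [coeff_one_sub_pow_mul, deltaOp, sum_apply, inner_sum, Finset.sum_div,
    Complex.ofReal_sum]
  refine Finset.sum_congr rfl fun β _ => ?_
  rw [smul_apply, inner_smul_right, ContinuousLinearMap.comp_apply,
    ContinuousLinearMap.adjoint_inner_right, inner_self_eq_norm_sq_to_K, mul_div_assoc,
    ← (ShiftsBy.tuplePow hρ hT β).norm_sq hρ α]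
  push_cast
  rfl

end ShiftsBy

/-- Theorem 1.4 / 4.2: a necessary condition, in terms of the weights, for a commuting
`m`-tuple of backward weighted shifts to be `n`-hypercontractive. -/
theorem stmt_6 (m n : ℕ) (hm : 2 ≤ m) (hn : 1 ≤ n)
    {H : Type*} [NormedAddCommGroup H] [InnerProductSpace ℂ H] [CompleteSpace H]
    (e : HilbertBasis (Fin m → ℕ) ℂ H)
    (ρ : (Fin m → ℕ) → ℝ) (hρ : ∀ α, 0 < ρ α)
    (T : Fin m → H →L[ℂ] H)
    (hTcomm : ∀ i j, T i ∘L T j = T j ∘L T i)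
    (hT : ∀ (α : Fin m → ℕ) (i : Fin m),
      T i (e α) = if α i = 0 then 0
        else (Real.sqrt (ρ (α - Pi.single i 1) / ρ α) : ℂ) • e (α - Pi.single i 1))
    (hyp : IsNHypercontractive T n) :
    ∀ α : Fin m → ℕ, α ≠ 0 →
      (∑ i ∈ Finset.univ.filter (fun i : Fin m => 1 ≤ α i),
          ρ (α - Pi.single i 1) / ρ α) ≤
        ((∑ i, α i : ℕ) : ℝ) / (((∑ i, α i : ℕ) : ℝ) + (n : ℝ) - 1) := by
  intro α hα
  have hS : ∀ i, ShiftsBy e ρ (T i) (Pi.single i 1) := by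
    intro i α
    have hiff : (Pi.single i 1 : Fin m → ℕ) ≤ α ↔ ¬ α i = 0 := by
      refine ⟨fun h => ?_, fun h j => ?_⟩
      · have := h i
        rw [Pi.single_eq_same] at this
        exact Nat.one_le_iff_ne_zero.1 this
      · rcases eq_or_ne j i with rfl | hj
        · rw [Pi.single_eq_same]
          exact Nat.one_le_iff_ne_zero.2 h
        · rw [Pi.single_eq_of_ne hj]
          exact Nat.zero_le _
    rw [hT α i]
    by_cases h : α i = 0
    · rw [if_pos h, if_neg (fun h2 => hiff.1 h2 h)]
    · rw [if_neg h, if_pos (hiff.2 h)]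
  obtain ⟨k, rfl⟩ : ∃ k, n = k + 1 := ⟨n - 1, by omega⟩
  have hpos : ∀ d, 0 ≤ MvPowerSeries.coeff d ((1 - ∑ i, MvPowerSeries.X i) ^ (k + 1) *
      weightSeries ρ) := by
    intro d
    have h := (hyp (k + 1) hn le_rfl).re_inner_nonneg_right (e d)
    rw [inner_deltaOp hρ hS] at h
    have h' : 0 ≤ MvPowerSeries.coeff d ((1 - ∑ i, MvPowerSeries.X i) ^ (k + 1) *
      weightSeries ρ) / ρ d := by simpa using h
    rwa [le_div_iff₀ (hρ _), zero_mul] at h'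
  have hmain := coeff_sum_X_mul_le k _ hpos (Finsupp.equivFunOnFinite.symm α)
  rw [coeff_sum_X_mul] at hmain
  have hN : 0 < ∑ i, α i := by
    obtain ⟨i, hi⟩ := Function.ne_iff.1 hα
    exact Finset.sum_pos' (fun _ _ => Nat.zero_le _) ⟨i, Finset.mem_univ i, Nat.pos_of_ne_zero hi⟩
  have hN' : (0 : ℝ) < ((∑ i, α i : ℕ) : ℝ) := by exact_mod_cast hN
  have hcoe : ∀ i : Fin m, MvPowerSeries.coeff
      (Finsupp.equivFunOnFinite.symm α - Finsupp.single i 1)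
      (weightSeries ρ) = ρ (α - Pi.single i 1) := by
    intro i
    rw [coeff_weightSeries]
    congr 1
    ext j
    simp [Finsupp.single_apply, Pi.single_apply, eq_comm]
  have hcoe0 : MvPowerSeries.coeff (Finsupp.equivFunOnFinite.symm α)
      (weightSeries ρ) = ρ α := rfl
  simp only [hcoe, hcoe0, Finsupp.equivFunOnFinite_symm_apply_apply] at hmain
  have hden : ((∑ i, α i : ℕ) : ℝ) + ((k + 1 : ℕ) : ℝ) - 1 = ((∑ i, α i : ℕ) : ℝ) + k := by
    push_cast
    ring
  rw [hden, ← Finset.sum_div, div_le_div_iff₀ (hρ α) (by positivity)]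
  linarith
end

section
/- Let m ≥ 1 and n ≥ 2 be integers, let ρ : ℕ^m → (0,∞), and let α ∈ ℕ^m be a nonzero multi-index. For each multi-index γ with 0 < γ < α (i.e. γ ≠ 0, γ ≤ α, γ ≠ α), set x_γ = −((n−2+|γ|)!/(γ!·(n−2)!))·(|α−γ|/|α|). Then Σ_{β ≤ α, |β| ≤ n} (−1)^{|β|}·(n!/(β!·(n−|β|)!))·ρ(α−β)/ρ(α) = 1 − Σ_{i : α_i ≥ 1} ((|α|+n−1)/|α|)·ρ(α−e_i)/ρ(α) + Σ_{0 < γ < α} x_γ · [ Σ_{ξ ≤ α−γ, |ξ| ≤ n} (−1)^{|ξ|}·(n!/(ξ!·(n−|ξ|)!))·ρ(α−γ−ξ)/ρ(α−γ) ] · ρ(α−γ)/ρ(α). -/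
open scoped BigOperators

/-!
Write `n = p + 2`, `N = |α|` and `s = z_1 + ⋯ + z_m`. The coefficients in the defect sums are those
of `(1 - s)^n`, and `(n-2+|γ|)!/(γ! (n-2)!)` is the coefficient of `z^γ` in `(1 - s)^{-(n-1)}`.
Multiplying by `N ρ(α)` and moving the sum over `γ` to the left, where the defect sum itself is the
term `γ = 0` and the term `γ = α` vanishes because of the factor `|α - γ|`, the claim becomes a
statement about the convolution of the families `(N - |γ|) [z^γ] (1 - s)^{-(n-1)}` and
`[z^ξ] (1 - s)^n`. With `E` the Euler operator, which multiplies `z^γ` by `|γ|`,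
`(N - E) (1 - s)^{-(n-1)} * (1 - s)^n = N (1 - s) - (n - 1) s = N - (N + n - 1) s`,
so that only `ρ(α)` and the `ρ(α - e_i)` survive (`key_identity`).

The product is computed in one variable, with power series (`convolution_one_var`), and transferred
to `m` variables by the Vandermonde convolution for multi-indices (`convolution_multi`).
-/

/-- Multi-index Vandermonde convolution, in the form of a linear functional `F` applied to
`∏ i, (X + 1) ^ δ i = (X + 1) ^ |δ|`. -/
theorem vandermonde_multi {m : ℕ} (δ : Fin m → ℕ) (F : ℕ → ℝ) :
    ∑ γ ∈ Finset.Iic δ, ((∏ i, (δ i).choose (γ i) : ℕ) : ℝ) * F (∑ i, γ i) =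
      ∑ k ∈ Finset.range (∑ i, δ i + 1), ((∑ i, δ i).choose k : ℝ) * F k := by
  have hI : Finset.Iic δ = Fintype.piFinset fun i => Finset.range (δ i + 1) := by
    ext γ
    simp [Fintype.mem_piFinset, Pi.le_def]
  have hpoly : ∑ γ ∈ Finset.Iic δ,
      (Polynomial.X : Polynomial ℝ) ^ (∑ i, γ i) * ((∏ i, (δ i).choose (γ i) : ℕ)) =
        (Polynomial.X + 1) ^ (∑ i, δ i) := by
    rw [hI, ← Finset.prod_pow_eq_pow_sum]
    simp_rw [add_pow, Finset.prod_univ_sum, Nat.cast_prod, ← Finset.prod_pow_eq_pow_sum,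
      ← Finset.prod_mul_distrib, one_pow, mul_one]
  have hcoeff : ∀ k, ∑ γ ∈ Finset.Iic δ,
      (if k = ∑ i, γ i then ((∏ i, (δ i).choose (γ i) : ℕ) : ℝ) else 0) =
        ((∑ i, δ i).choose k : ℝ) := by
    intro k
    have h := congrArg (fun q => Polynomial.coeff q k) hpoly
    simp only [Polynomial.finsetSum_coeff, Polynomial.coeff_mul_natCast,
      Polynomial.coeff_X_pow, Polynomial.coeff_X_add_one_pow, ite_mul, one_mul, zero_mul] at h
    exact h
  simp_rw [← hcoeff, Finset.sum_mul]
  rw [Finset.sum_comm]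
  refine Finset.sum_congr rfl fun γ hγ => ?_
  have hle : ∑ i, γ i ≤ ∑ i, δ i := Finset.sum_le_sum fun i _ => Finset.mem_Iic.1 hγ i
  simp only [ite_mul, zero_mul]
  rw [Finset.sum_ite_eq' , if_pos (by simpa [Nat.lt_succ_iff] using hle)]

theorem coeff_one_sub_X_pow (n k : ℕ) :
    PowerSeries.coeff k ((1 - PowerSeries.X : PowerSeries ℝ) ^ n) = (-1) ^ k * (n.choose k : ℝ) := by
  induction n generalizing k with
  | zero => cases k <;> simp [PowerSeries.coeff_one]
  | succ n ih =>
    rw [pow_succ, mul_sub, mul_one, map_sub, ih]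
    cases k with
    | zero => simp
    | succ k =>
      rw [PowerSeries.coeff_succ_mul_X, ih, Nat.choose_succ_succ]
      push_cast
      ring

/-- The coefficient of `X ^ D` in `(N - X d/dX) (1 - X)^{-(p+1)} * (1 - X)^{p+2} = N - (N + p + 1) X`.
The derivative term is `X d/dX (1 - X)^{-(p+1)} = (p + 1) X (1 - X)^{-(p+2)}`. -/
theorem convolution_one_var (p D : ℕ) (N : ℝ) :
    ∑ k ∈ Finset.range (D + 1), ((p + k).choose p : ℝ) * (N - k) *
        ((-1) ^ (D - k) * ((p + 2).choose (D - k) : ℝ)) =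
      if D = 0 then N else if D = 1 then -(N + p + 1) else 0 := by
  have hA := PowerSeries.mk_add_choose_mul_one_sub_pow_eq_one ℝ p
  have hA' := PowerSeries.mk_add_choose_mul_one_sub_pow_eq_one ℝ (p + 1)
  set A : PowerSeries ℝ := PowerSeries.mk fun k => ((p + k).choose p : ℝ) with hAdef
  set A' : PowerSeries ℝ := PowerSeries.mk fun k => ((p + 1 + k).choose (p + 1) : ℝ) with hAdef'
  have hmk : (PowerSeries.mk fun k => ((p + k).choose p : ℝ) * (N - k)) =
      PowerSeries.C N * A - PowerSeries.C ((p : ℝ) + 1) * (A' * PowerSeries.X) := by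
    ext k
    rw [map_sub, PowerSeries.coeff_C_mul, PowerSeries.coeff_C_mul, PowerSeries.coeff_mk]
    cases k with
    | zero => simp [hAdef]
    | succ k =>
      rw [PowerSeries.coeff_succ_mul_X, hAdef, hAdef', PowerSeries.coeff_mk, PowerSeries.coeff_mk]
      have h := Nat.choose_succ_right_eq (p + 1 + k) p
      rw [show p + 1 + k - p = k + 1 by omega] at h
      rw [show p + (k + 1) = p + 1 + k by omega]
      have h' : ((p + 1 + k).choose (p + 1) : ℝ) * (p + 1) = (p + 1 + k).choose p * (k + 1) := by
        exact_mod_cast h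
      push_cast
      linear_combination h'
  have hprod : (PowerSeries.mk fun k => ((p + k).choose p : ℝ) * (N - k)) *
      (1 - PowerSeries.X) ^ (p + 2) =
        PowerSeries.C N - PowerSeries.C (N + p + 1) * PowerSeries.X := by
    rw [hmk]
    simp only [map_add, map_one]
    linear_combination (PowerSeries.C N * (1 - PowerSeries.X)) * hA -
      ((PowerSeries.C (p : ℝ) + 1) * PowerSeries.X) * hA'
  have h := congrArg (PowerSeries.coeff D) hprod
  rw [PowerSeries.coeff_mul, Finset.Nat.sum_antidiagonal_eq_sum_range_succ_mk] at h
  simp only [PowerSeries.coeff_mk, coeff_one_sub_X_pow] at h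
  rw [h, map_sub, PowerSeries.coeff_C_mul, PowerSeries.coeff_C, PowerSeries.coeff_X]
  rcases D with _ | _ | D <;> simp

/-- The coefficient `(p + |γ|)! / (γ! p!)` of `z^γ` in `(1 - (z_1 + ⋯ + z_m))^{-(p+1)}`. -/
noncomputable def negBinomCoeff {m : ℕ} (p : ℕ) (γ : Fin m → ℕ) : ℝ :=
  ((p + ∑ i, γ i).factorial : ℝ) / (((∏ i, (γ i).factorial : ℕ) : ℝ) * (p.factorial : ℝ))

/-- The coefficient `(-1)^{|β|} n! / (β! (n - |β|)!)` of `z^β` in `(1 - (z_1 + ⋯ + z_m))^n`, equal to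
`0` for `|β| > n`. -/
noncomputable def binomCoeff {m : ℕ} (n : ℕ) (β : Fin m → ℕ) : ℝ :=
  if ∑ i, β i ≤ n then
    (-1 : ℝ) ^ (∑ i, β i) *
      ((n.factorial : ℝ) /
        (((∏ i, (β i).factorial : ℕ) : ℝ) * ((n - ∑ i, β i).factorial : ℝ)))
  else 0

theorem prod_factorial_ne_zero {m : ℕ} (γ : Fin m → ℕ) :
    ((∏ i, (γ i).factorial : ℕ) : ℝ) ≠ 0 := by
  exact_mod_cast Finset.prod_ne_zero_iff.2 fun i _ => Nat.factorial_ne_zero _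

theorem negBinomCoeff_eq {m : ℕ} (p : ℕ) (γ : Fin m → ℕ) :
    negBinomCoeff p γ = ((∑ i, γ i).factorial : ℝ) / ((∏ i, (γ i).factorial : ℕ) : ℝ) *
      ((p + ∑ i, γ i).choose p : ℝ) := by
  have h : ((p + ∑ i, γ i).choose p : ℝ) * p.factorial * (∑ i, γ i).factorial =
      (p + ∑ i, γ i).factorial := by
    have h := Nat.choose_mul_factorial_mul_factorial (Nat.le_add_right p (∑ i, γ i))
    rw [Nat.add_sub_cancel_left] at h
    exact_mod_cast h
  have h1 := prod_factorial_ne_zero γ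
  have h2 : (p.factorial : ℝ) ≠ 0 := by exact_mod_cast Nat.factorial_ne_zero p
  rw [negBinomCoeff, ← h]
  field_simp

theorem binomCoeff_eq {m : ℕ} (n : ℕ) (β : Fin m → ℕ) :
    binomCoeff n β = ((∑ i, β i).factorial : ℝ) / ((∏ i, (β i).factorial : ℕ) : ℝ) *
      ((-1) ^ (∑ i, β i) * (n.choose (∑ i, β i) : ℝ)) := by
  unfold binomCoeff
  split_ifs with hle
  · have h : (n.choose (∑ i, β i) : ℝ) * (∑ i, β i).factorial * (n - ∑ i, β i).factorial =
        n.factorial := by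
      exact_mod_cast Nat.choose_mul_factorial_mul_factorial hle
    have h1 := prod_factorial_ne_zero β
    have h2 : ((n - ∑ i, β i).factorial : ℝ) ≠ 0 := by exact_mod_cast Nat.factorial_ne_zero _
    rw [← h]
    field_simp
  · rw [Nat.choose_eq_zero_of_lt (by omega)]
    simp

/-- The multivariate form of `convolution_one_var`: with `s = z_1 + ⋯ + z_m`, the coefficient of
`z^δ` in `N - (N + p + 1) s`. -/
theorem convolution_multi {m : ℕ} (p : ℕ) (δ : Fin m → ℕ) (N : ℝ) :
    ∑ γ ∈ Finset.Iic δ, negBinomCoeff p γ * (N - (∑ i, γ i : ℕ)) * binomCoeff (p + 2) (δ - γ) =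
      if ∑ i, δ i = 0 then N else if ∑ i, δ i = 1 then -(N + p + 1) else 0 := by
  set D := ∑ i, δ i with hD
  let M : ℝ := ((∏ i, (δ i).factorial : ℕ) : ℝ)
  have hM : M ≠ 0 := prod_factorial_ne_zero δ
  let F : ℕ → ℝ := fun k => (k.factorial : ℝ) * (D - k).factorial *
    (((p + k).choose p : ℝ) * (N - k) * ((-1) ^ (D - k) * ((p + 2).choose (D - k) : ℝ)))
  have hterm : ∀ γ ∈ Finset.Iic δ,
      negBinomCoeff p γ * (N - (∑ i, γ i : ℕ)) * binomCoeff (p + 2) (δ - γ) =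
        M⁻¹ * (((∏ i, (δ i).choose (γ i) : ℕ) : ℝ) * F (∑ i, γ i)) := by
    intro γ hγ
    have hle : ∀ i, γ i ≤ δ i := Finset.mem_Iic.1 hγ
    have hsub : ∑ i, (δ - γ) i = D - ∑ i, γ i := by
      simp only [Pi.sub_apply, hD]
      exact Finset.sum_tsub_distrib _ fun i _ => hle i
    have hch : ((∏ i, (δ i).choose (γ i) : ℕ) : ℝ) * ((∏ i, (γ i).factorial : ℕ) : ℝ) *
        ((∏ i, ((δ - γ) i).factorial : ℕ) : ℝ) = M := by
      simp only [M]
      rw [← Nat.cast_mul, ← Nat.cast_mul, ← Finset.prod_mul_distrib, ← Finset.prod_mul_distrib]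
      congr 1
      exact Finset.prod_congr rfl fun i _ => Nat.choose_mul_factorial_mul_factorial (hle i)
    have h1 := prod_factorial_ne_zero γ
    have h2 := prod_factorial_ne_zero (δ - γ)
    rw [negBinomCoeff_eq, binomCoeff_eq, hsub]
    simp only [F]
    rw [← hch] at hM ⊢
    have h3 := left_ne_zero_of_mul (left_ne_zero_of_mul hM)
    field_simp
  have hone : ∀ k ∈ Finset.range (D + 1), (D.choose k : ℝ) * F k = (D.factorial : ℝ) *
      (((p + k).choose p : ℝ) * (N - k) * ((-1) ^ (D - k) * ((p + 2).choose (D - k) : ℝ))) := by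
    intro k hk
    have h : (D.choose k : ℝ) * k.factorial * (D - k).factorial = D.factorial := by
      exact_mod_cast Nat.choose_mul_factorial_mul_factorial (Finset.mem_range_succ_iff.1 hk)
    simp only [F]
    rw [← h]
    ring
  rw [Finset.sum_congr rfl hterm, ← Finset.mul_sum, vandermonde_multi, ← hD,
    Finset.sum_congr rfl hone, ← Finset.mul_sum, convolution_one_var]
  -- if `|δ| ≤ 1` then `|δ|! = δ! = 1`
  by_cases hD2 : D ≤ 1
  · have hM1 : M = 1 := by
      simp only [M]
      rw [Finset.prod_eq_one, Nat.cast_one]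
      intro i _
      have : δ i ≤ D := Finset.single_le_sum (f := δ) (fun _ _ => Nat.zero_le _) (Finset.mem_univ i)
      exact Nat.factorial_eq_one.2 (this.trans hD2)
    rw [hM1, Nat.factorial_eq_one.2 hD2]
    simp
  · rw [if_neg (by omega), if_neg (by omega)]
    simp

/-- Associativity of the convolution of families on `ℕ^m`, by the substitution `δ = γ + ξ`. -/
theorem sum_convolution {m : ℕ} (α : Fin m → ℕ) (a b r : (Fin m → ℕ) → ℝ) :
    ∑ γ ∈ Finset.Iic α, a γ * ∑ ξ ∈ Finset.Iic (α - γ), b ξ * r (α - γ - ξ) =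
      ∑ δ ∈ Finset.Iic α, (∑ γ ∈ Finset.Iic δ, a γ * b (δ - γ)) * r (α - δ) := by
  simp_rw [Finset.mul_sum, Finset.sum_mul]
  rw [Finset.sum_sigma', Finset.sum_sigma']
  refine Finset.sum_nbij' (fun x => ⟨x.1 + x.2, x.1⟩) (fun y => ⟨y.2, y.1 - y.2⟩) ?_ ?_ ?_ ?_ ?_
  · rintro ⟨γ, ξ⟩ h
    simp only [Finset.mem_sigma, Finset.mem_Iic, Pi.le_def, Pi.sub_apply, Pi.add_apply] at h ⊢
    exact ⟨fun i => by have := h.1 i; have := h.2 i; omega, fun i => by omega⟩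
  · rintro ⟨δ, γ⟩ h
    simp only [Finset.mem_sigma, Finset.mem_Iic, Pi.le_def, Pi.sub_apply] at h ⊢
    exact ⟨fun i => (h.2 i).trans (h.1 i), fun i => by have := h.1 i; omega⟩
  · rintro ⟨γ, ξ⟩ _
    simp
  · rintro ⟨δ, γ⟩ h
    simp only [Finset.mem_sigma, Finset.mem_Iic] at h
    simp [add_tsub_cancel_of_le h.2]
  · rintro ⟨γ, ξ⟩ _
    simp [tsub_add_eq_tsub_tsub, mul_assoc]

/-- The multi-indices of degree one below `α` are the `e_i` with `α_i ≥ 1`. -/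
theorem sum_degree_one {m : ℕ} (α : Fin m → ℕ) (f : (Fin m → ℕ) → ℝ) :
    ∑ δ ∈ (Finset.Iic α).filter (fun δ => ∑ i, δ i = 1), f δ =
      ∑ i ∈ Finset.univ.filter (fun i : Fin m => 1 ≤ α i), f (Pi.single i 1) := by
  symm
  refine Finset.sum_bij (fun i _ => Pi.single i 1) ?_ ?_ ?_ ?_
  · intro i hi
    simp only [Finset.mem_filter, Finset.mem_univ, true_and, Finset.mem_Iic] at hi ⊢
    refine ⟨fun j => ?_, by simp⟩
    by_cases hj : j = i
    · subst hj
      simpa using hi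
    · simp [Pi.single_eq_of_ne hj]
  · intro i _ j _ h
    by_contra hij
    have := congrFun h i
    simp [Pi.single_eq_of_ne hij] at this
  · intro δ hδ
    simp only [Finset.mem_filter, Finset.mem_Iic] at hδ
    obtain ⟨i, hi⟩ : ∃ i, δ i ≠ 0 := by
      by_contra! h
      simp [h] at hδ
    have hsplit := Finset.add_sum_erase Finset.univ δ (Finset.mem_univ i)
    have hle : 1 ≤ α i := (Nat.one_le_iff_ne_zero.2 hi).trans (hδ.1 i)
    refine ⟨i, Finset.mem_filter.2 ⟨Finset.mem_univ i, hle⟩, ?_⟩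
    ext j
    by_cases hj : j = i
    · subst hj
      rw [Pi.single_eq_same]
      omega
    · have : δ j ≤ ∑ k ∈ Finset.univ.erase i, δ k :=
        Finset.single_le_sum (f := δ) (fun _ _ => Nat.zero_le _) (by simp [hj])
      rw [Pi.single_eq_of_ne hj]
      omega
  · exact fun _ _ => rfl

/-- The claim with denominators cleared, the terms `γ = 0` and `γ = α` being included in the sum on
the left. -/
theorem key_identity {m : ℕ} (p : ℕ) (ρ : (Fin m → ℕ) → ℝ) (α : Fin m → ℕ) (N : ℝ) :
    ∑ γ ∈ Finset.Iic α, negBinomCoeff p γ * (N - (∑ i, γ i : ℕ)) *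
        ∑ ξ ∈ Finset.Iic (α - γ), binomCoeff (p + 2) ξ * ρ (α - γ - ξ) =
      N * ρ α - (N + p + 1) *
        ∑ i ∈ Finset.univ.filter (fun i : Fin m => 1 ≤ α i), ρ (α - Pi.single i 1) := by
  rw [sum_convolution α (fun γ => negBinomCoeff p γ * (N - (∑ i, γ i : ℕ)))]
  simp only [convolution_multi]
  rw [← sum_degree_one α (fun δ => ρ (α - δ)), Finset.sum_filter, Finset.mul_sum]
  have hzero : N * ρ α = ∑ δ ∈ Finset.Iic α, if δ = 0 then N * ρ (α - δ) else 0 := by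
    rw [Finset.sum_ite_eq', if_pos (Finset.mem_Iic.2 zero_le), tsub_zero]
  rw [hzero, ← Finset.sum_sub_distrib]
  refine Finset.sum_congr rfl fun δ _ => ?_
  have hiff : ∑ i, δ i = 0 ↔ δ = 0 := by
    simp [Finset.sum_eq_zero_iff, funext_iff]
  by_cases h0 : δ = 0
  · subst h0
    simp
  · rw [if_neg (hiff.not.2 h0), if_neg h0]
    split_ifs <;> ring

/-- Equation (4.4) in the proof of Theorem 4.2: the algebraic decomposition of the `n`-th
defect sum. For `n ≥ 2`, a positive weight function `ρ` on `ℕ^m`, and a nonzero multi-index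
`α`, with `x_γ = −((n−2+|γ|)!/(γ!·(n−2)!))·(|α−γ|/|α|)` for `0 < γ < α`:
`Σ_{β ≤ α, |β| ≤ n} (−1)^{|β|}(n!/(β!(n−|β|)!)) ρ(α−β)/ρ(α)
  = 1 − Σ_{i : α_i ≥ 1} ((|α|+n−1)/|α|) ρ(α−e_i)/ρ(α)
    + Σ_{0<γ<α} x_γ [Σ_{ξ ≤ α−γ, |ξ| ≤ n} (−1)^{|ξ|}(n!/(ξ!(n−|ξ|)!)) ρ(α−γ−ξ)/ρ(α−γ)] ρ(α−γ)/ρ(α)`. -/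
theorem stmt_7 (m n : ℕ) (hm : 1 ≤ m) (hn : 2 ≤ n)
    (ρ : (Fin m → ℕ) → ℝ) (hρ : ∀ α, 0 < ρ α)
    (α : Fin m → ℕ) (hα : α ≠ 0) :
    (∑ β ∈ (Finset.Iic α).filter (fun β => ∑ i, β i ≤ n),
        (-1 : ℝ) ^ (∑ i, β i) *
          ((n.factorial : ℝ) /
            (((∏ i, (β i).factorial : ℕ) : ℝ) * ((n - ∑ i, β i).factorial : ℝ))) *
          (ρ (α - β) / ρ α)) =
      1 -
        (∑ i ∈ Finset.univ.filter (fun i : Fin m => 1 ≤ α i),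
          ((((∑ j, α j : ℕ) : ℝ) + (n : ℝ) - 1) / ((∑ j, α j : ℕ) : ℝ)) *
            (ρ (α - Pi.single i 1) / ρ α)) +
      ∑ γ ∈ (Finset.Iic α).filter (fun γ => γ ≠ 0 ∧ γ ≠ α),
        (-((((n - 2 + ∑ i, γ i).factorial : ℝ) /
              (((∏ i, (γ i).factorial : ℕ) : ℝ) * (((n - 2).factorial : ℕ) : ℝ))) *
            (((∑ i, (α - γ) i : ℕ) : ℝ) / ((∑ i, α i : ℕ) : ℝ)))) *
          (∑ ξ ∈ (Finset.Iic (α - γ)).filter (fun ξ => ∑ i, ξ i ≤ n),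
            (-1 : ℝ) ^ (∑ i, ξ i) *
              ((n.factorial : ℝ) /
                (((∏ i, (ξ i).factorial : ℕ) : ℝ) * ((n - ∑ i, ξ i).factorial : ℝ))) *
              (ρ (α - γ - ξ) / ρ (α - γ))) *
          (ρ (α - γ) / ρ α) := by
  obtain ⟨p, rfl⟩ : ∃ p, n = p + 2 := ⟨n - 2, by omega⟩
  set N : ℝ := ((∑ j, α j : ℕ) : ℝ) with hN
  have hN0 : N ≠ 0 := by
    rw [hN, Nat.cast_ne_zero]
    intro h
    exact hα (funext fun i => by simpa using (Finset.sum_eq_zero_iff.1 h) i (Finset.mem_univ i))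
  have hρα : ρ α ≠ 0 := (hρ α).ne'
  let T : (Fin m → ℕ) → ℝ := fun γ =>
    ∑ ξ ∈ Finset.Iic (α - γ), binomCoeff (p + 2) ξ * ρ (α - γ - ξ)
  -- the bracketed defect sums, after clearing the denominator
  have hinner : ∀ σ : Fin m → ℕ,
      (∑ ξ ∈ (Finset.Iic σ).filter (fun ξ => ∑ i, ξ i ≤ p + 2),
        (-1 : ℝ) ^ (∑ i, ξ i) *
          (((p + 2).factorial : ℝ) /
            (((∏ i, (ξ i).factorial : ℕ) : ℝ) * ((p + 2 - ∑ i, ξ i).factorial : ℝ))) *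
          (ρ (σ - ξ) / ρ σ)) =
      (∑ ξ ∈ Finset.Iic σ, binomCoeff (p + 2) ξ * ρ (σ - ξ)) / ρ σ := by
    intro σ
    rw [Finset.sum_filter, Finset.sum_div]
    refine Finset.sum_congr rfl fun ξ _ => ?_
    unfold binomCoeff
    split_ifs
    · rw [mul_div_assoc]
    · simp
  have hkey := key_identity p ρ α N
  -- the term `γ = α` vanishes, and the term `γ = 0` is `N` times the left-hand side
  have hsplit : ∑ γ ∈ Finset.Iic α, negBinomCoeff p γ * (N - (∑ i, γ i : ℕ)) * T γ =
      N * T 0 + ∑ γ ∈ (Finset.Iic α).filter (fun γ => γ ≠ 0 ∧ γ ≠ α),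
        negBinomCoeff p γ * (N - (∑ i, γ i : ℕ)) * T γ := by
    have h0 : (0 : Fin m → ℕ) ∈ Finset.Iic α := Finset.mem_Iic.2 zero_le
    rw [← Finset.add_sum_erase _ _ h0]
    congr 1
    · have : negBinomCoeff p (0 : Fin m → ℕ) = 1 := by
        simp [negBinomCoeff, Nat.factorial_ne_zero]
      simp [this]
    · symm
      refine Finset.sum_subset (fun γ hγ => ?_) fun γ hγ hγ' => ?_
      · rw [Finset.mem_filter] at hγ
        exact Finset.mem_erase.2 ⟨hγ.2.1, hγ.1⟩
      · rw [Finset.mem_erase] at hγ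
        have hγα : γ = α := by
          by_contra hne
          exact hγ' (Finset.mem_filter.2 ⟨hγ.2, hγ.1, hne⟩)
        rw [hγα, ← hN]
        simp
  have hγterm : ∀ γ ∈ (Finset.Iic α).filter (fun γ => γ ≠ 0 ∧ γ ≠ α),
      (-((((p + 2 - 2 + ∑ i, γ i).factorial : ℝ) /
              (((∏ i, (γ i).factorial : ℕ) : ℝ) * (((p + 2 - 2).factorial : ℕ) : ℝ))) *
            (((∑ i, (α - γ) i : ℕ) : ℝ) / N))) *
          ((∑ ξ ∈ Finset.Iic (α - γ), binomCoeff (p + 2) ξ * ρ (α - γ - ξ)) / ρ (α - γ)) *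
          (ρ (α - γ) / ρ α) =
        -(N * ρ α)⁻¹ * (negBinomCoeff p γ * (N - (∑ i, γ i : ℕ)) * T γ) := by
    intro γ hγ
    have hle : ∀ i, γ i ≤ α i := Finset.mem_Iic.1 (Finset.mem_filter.1 hγ).1
    have hsub : ((∑ i, (α - γ) i : ℕ) : ℝ) = N - (∑ i, γ i : ℕ) := by
      simp only [Pi.sub_apply]
      rw [Finset.sum_tsub_distrib _ fun i _ => hle i,
        Nat.cast_sub (Finset.sum_le_sum fun i _ => hle i)]
    have hργ : ρ (α - γ) ≠ 0 := (hρ _).ne'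
    rw [hsub]
    change -(negBinomCoeff p γ * _) * (T γ / _) * _ = _
    field_simp
  have hρsum : ∑ i ∈ Finset.univ.filter (fun i : Fin m => 1 ≤ α i),
      ((N + ((p + 2 : ℕ) : ℝ) - 1) / N) * (ρ (α - Pi.single i 1) / ρ α) =
        (N + p + 1) / (N * ρ α) *
          ∑ i ∈ Finset.univ.filter (fun i : Fin m => 1 ≤ α i), ρ (α - Pi.single i 1) := by
    rw [Finset.mul_sum]
    refine Finset.sum_congr rfl fun i _ => ?_
    push_cast
    field_simp
    ring
  simp only [hinner]
  rw [hρsum, Finset.sum_congr rfl hγterm, ← Finset.mul_sum]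
  have hT0 : ∑ ξ ∈ Finset.Iic α, binomCoeff (p + 2) ξ * ρ (α - ξ) = T 0 := by
    simp [T]
  rw [hT0]
  have hfin := hsplit.symm.trans hkey
  field_simp
  linear_combination hfin
end

section
/- Let m ≥ 2 and n ≥ 1 be integers, let a : ℕ → (0,∞), define ρ : ℕ^m → (0,∞) by ρ(α) = a(|α|)·|α|!/α!, and let T = (T_1,…,T_m) be the associated m-tuple of backward weighted shifts on H. If T is n-hypercontractive, then a(i−1)/a(i) ≤ i/(i+n−1) for every integer i ≥ 1. -/
/-!
Evaluating `⟨Δ_T^{(k)} e_α, e_α⟩` at `α = (N, 0, …, 0)` leaves only the terms `β = (j, 0, …, 0)`,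
and there `ρ(α) = a N`. Positivity of `Δ_T^{(n)}` therefore says that the alternating sums
`∑ j, (-1) ^ j * n.choose j * a (N - j)` are nonnegative (`backDiff_nonneg`), i.e. that
`C(z) = (1 - z) ^ n * A(z)` has nonnegative coefficients, where `A(z) = ∑ a i z ^ i`.

The claim `(i + n - 1) a (i - 1) ≤ i a i` says that `(1 - z) A' - n A` has nonnegative coefficients.
This holds since it equals `C' / (1 - z) ^ (n - 1)`; `ratio_of_backDiff` proves it by induction on
`n`, dividing by one factor `1 - z` (that is, taking partial sums) at each step.
-/

open scoped BigOperators

/-- `ρ̂(α) = a(|α|)·|α|!/α!`. -/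
noncomputable def rhoHat (m : ℕ) (a : ℕ → ℝ) (α : Fin m → ℕ) : ℝ :=
  a (∑ i, α i) * ((∑ i, α i).factorial : ℝ) / ((∏ i, (α i).factorial : ℕ) : ℝ)

/-- The sequence of coefficients of `(1 - z) * ∑ a i z ^ i`. -/
def backDiff (a : ℕ → ℝ) : ℕ → ℝ
  | 0 => a 0
  | i + 1 => a (i + 1) - a i

/-- Iterating `backDiff` gives the alternating binomial sums. Terms with `j > k` vanish because
`k.choose j = 0`. -/
lemma backDiff_iterate (a : ℕ → ℝ) (k N : ℕ) :
    backDiff^[k] a N = ∑ j ∈ Finset.range (N + 1), (-1) ^ j * (k.choose j : ℝ) * a (N - j) := by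
  induction k generalizing N with
  | zero =>
    rw [Finset.sum_range_succ', Finset.sum_eq_zero]
    · simp
    · intro j _
      simp
  | succ k ih =>
    rw [Function.iterate_succ_apply']
    cases N with
    | zero => simp [backDiff, ih]
    | succ N =>
      simp only [backDiff, ih]
      rw [Finset.sum_range_succ' _ (N + 1), Finset.sum_range_succ' _ (N + 1)]
      simp only [Nat.choose_succ_succ, Nat.add_sub_add_right, Nat.cast_add, pow_succ]
      have : ∀ j, (-1 : ℝ) ^ j * -1 * ((k.choose j : ℝ) + (k.choose (j + 1) : ℝ)) * a (N - j)
          = (-1 : ℝ) ^ j * -1 * (k.choose (j + 1) : ℝ) * a (N - j)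
            - (-1 : ℝ) ^ j * (k.choose j : ℝ) * a (N - j) := fun j => by ring
      simp only [Nat.succ_eq_add_one, this, Finset.sum_sub_distrib]
      simp
      ring

/-- The scalar inequality. With `G i = (i + 1) a (i + 1) - (i + 1 + k) a i`, the increments of `G`
are the same expressions for `backDiff a` and `k - 1`, so `G` is a sum of nonnegative terms. -/
lemma ratio_of_backDiff (k : ℕ) (a : ℕ → ℝ) (h : ∀ N, 0 ≤ backDiff^[k + 1] a N) (i : ℕ) :
    ((i : ℝ) + 1 + k) * a i ≤ ((i : ℝ) + 1) * a (i + 1) := by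
  induction k generalizing a i with
  | zero =>
    have h1 := h (i + 1)
    simp only [zero_add, Function.iterate_one, backDiff] at h1
    have : (0 : ℝ) ≤ (i : ℝ) + 1 := by positivity
    push_cast
    nlinarith
  | succ k ih =>
    have hb := ih (backDiff a) (fun N => by simpa [Function.iterate_succ_apply] using h N)
    induction i with
    | zero =>
      have := hb 0
      simp only [backDiff] at this
      push_cast at *
      linarith
    | succ i ihi =>
      have := hb (i + 1)
      simp only [backDiff] at this
      push_cast at *
      linarith

lemma prod_ofFn_apply_eigen {H : Type*} [NormedAddCommGroup H] [InnerProductSpace ℂ H]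
    {p : ℕ} (A : Fin p → H →L[ℂ] H) (c : Fin p → ℂ) (v : H) (h : ∀ i, A i v = c i • v) :
    (List.ofFn A).prod v = (∏ i, c i) • v := by
  induction p with
  | zero => simp
  | succ p ih =>
    rw [List.ofFn_succ, List.prod_cons, mul_apply_eq_comp,
      ih (fun i => A i.succ) (fun i => c i.succ) (fun i => h _), map_smul, h, smul_smul,
      Fin.prod_univ_succ, mul_comm]

lemma rhoHat_single (m : ℕ) (a : ℕ → ℝ) (N : ℕ) :
    rhoHat (m + 1) a (Pi.single 0 N) = a N := by
  have : ∏ i : Fin (m + 1), ((Pi.single 0 N : Fin (m + 1) → ℕ) i).factorial = N.factorial := by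
    rw [Fin.prod_univ_succ]
    simp
  have hN : (N.factorial : ℝ) ≠ 0 := by positivity
  rw [rhoHat, this, Finset.sum_pi_single']
  simp only [Finset.mem_univ, if_true]
  field_simp

section Shift

variable {m : ℕ} {a : ℕ → ℝ} {H : Type*} [NormedAddCommGroup H] [InnerProductSpace ℂ H]

lemma pow_apply_single (ha : ∀ i, 0 < a i) (e : HilbertBasis (Fin (m + 1) → ℕ) ℂ H)
    (T : Fin (m + 1) → H →L[ℂ] H)
    (hT : ∀ (α : Fin (m + 1) → ℕ) (i : Fin (m + 1)),
      T i (e α) = if α i = 0 then 0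
        else (Real.sqrt (rhoHat (m + 1) a (α - Pi.single i 1) / rhoHat (m + 1) a α) : ℂ) •
          e (α - Pi.single i 1)) (N j : ℕ) :
    (T 0 ^ j) (e (Pi.single 0 N)) =
      if j ≤ N then (Real.sqrt (a (N - j) / a N) : ℂ) • e (Pi.single 0 (N - j)) else 0 := by
  induction j with
  | zero => simp [div_self (ha N).ne']
  | succ j ih =>
    rw [pow_succ', mul_apply_eq_comp, ih]
    split_ifs with h1 h2 h2
    · have h3 : N - j ≠ 0 := by omega
      have h4 : (Pi.single 0 (N - j) - Pi.single 0 1 : Fin (m + 1) → ℕ)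
          = Pi.single 0 (N - (j + 1)) := by
        ext i
        refine Fin.cases ?_ (fun i => ?_) i
        · simp [Nat.sub_sub]
        · simp
      rw [map_smul, hT, Pi.single_eq_same, if_neg h3, h4, rhoHat_single, rhoHat_single, smul_smul,
        ← Complex.ofReal_mul, ← Real.sqrt_mul (div_pos (ha _) (ha _)).le]
      congr 3
      have := (ha (N - j)).ne'
      have := (ha N).ne'
      field_simp
    · have h3 : N - j = 0 := by omega
      rw [map_smul, hT, Pi.single_eq_same, if_pos h3, smul_zero]
    · omega
    · simp

/-- Only the powers `β = j e₀` act nontrivially on the basis vector at `N e₀`. -/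
lemma norm_tuplePow_single (ha : ∀ i, 0 < a i) (e : HilbertBasis (Fin (m + 1) → ℕ) ℂ H)
    (T : Fin (m + 1) → H →L[ℂ] H)
    (hT : ∀ (α : Fin (m + 1) → ℕ) (i : Fin (m + 1)),
      T i (e α) = if α i = 0 then 0
        else (Real.sqrt (rhoHat (m + 1) a (α - Pi.single i 1) / rhoHat (m + 1) a α) : ℂ) •
          e (α - Pi.single i 1)) (N : ℕ) (β : Fin (m + 1) → ℕ) :
    ‖tuplePow T β (e (Pi.single 0 N))‖ ^ 2 =
      if β = Pi.single 0 (β 0) ∧ β 0 ≤ N then a (N - β 0) / a N else 0 := by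
  have key : tuplePow T β (e (Pi.single 0 N)) =
      (∏ i : Fin m, if β i.succ = 0 then (1 : ℂ) else 0) •
        (T 0 ^ β 0) (e (Pi.single 0 N)) := by
    rw [tuplePow, List.ofFn_succ, List.prod_cons, mul_apply_eq_comp,
      prod_ofFn_apply_eigen _ (fun i => if β i.succ = 0 then (1 : ℂ) else 0), map_smul]
    intro i
    split_ifs with h
    · simp [h]
    · obtain ⟨b, hb⟩ := Nat.exists_eq_succ_of_ne_zero h
      rw [hb, Nat.succ_eq_add_one, pow_succ, mul_apply_eq_comp, hT,
        if_pos (by simp), map_zero, zero_smul]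
  have hiff : (∀ i : Fin m, β i.succ = 0) ↔ β = Pi.single 0 (β 0) := by
    constructor
    · intro h
      ext i
      refine Fin.cases ?_ (fun i => ?_) i <;> simp [h]
    · intro h i
      rw [h]
      simp
  rw [key, pow_apply_single ha e T hT]
  by_cases h : ∀ i : Fin m, β i.succ = 0
  · by_cases h2 : β 0 ≤ N
    · rw [if_pos h2, if_pos ⟨hiff.1 h, h2⟩]
      simp only [h, if_true, Finset.prod_const_one, one_smul, norm_smul, e.orthonormal.1, mul_one,
        Complex.norm_real, Real.norm_eq_abs, sq_abs]
      exact Real.sq_sqrt (div_pos (ha _) (ha _)).le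
    · rw [if_neg h2, if_neg (fun h => h2 h.2)]
      simp
  · have h' : ¬(β = Pi.single 0 (β 0) ∧ β 0 ≤ N) := fun h' => h (hiff.2 h'.1)
    rw [if_neg h']
    push Not at h
    obtain ⟨i, hi⟩ := h
    rw [Finset.prod_eq_zero (Finset.mem_univ i) (if_neg hi)]
    simp

lemma backDiff_nonneg [CompleteSpace H] (ha : ∀ i, 0 < a i) (e : HilbertBasis (Fin (m + 1) → ℕ) ℂ H)
    (T : Fin (m + 1) → H →L[ℂ] H)
    (hT : ∀ (α : Fin (m + 1) → ℕ) (i : Fin (m + 1)),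
      T i (e α) = if α i = 0 then 0
        else (Real.sqrt (rhoHat (m + 1) a (α - Pi.single i 1) / rhoHat (m + 1) a α) : ℂ) •
          e (α - Pi.single i 1)) (k : ℕ) (hk : (deltaOp T k).IsPositive) (N : ℕ) :
    0 ≤ backDiff^[k] a N := by
  have h0 := hk.re_inner_nonneg_left (e (Pi.single 0 N))
  have hterm : ∀ (r : ℝ) (A : H →L[ℂ] H) (v : H),
      RCLike.re (inner ℂ (((r : ℂ) • (ContinuousLinearMap.adjoint A ∘L A)) v) v)
        = r * ‖A v‖ ^ 2 := by
    intro r A v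
    rw [smul_apply, inner_smul_left, ContinuousLinearMap.comp_apply,
      ContinuousLinearMap.adjoint_inner_left, inner_self_eq_norm_sq_to_K]
    simp [← Complex.ofReal_pow]
  rw [deltaOp, sum_apply, sum_inner, map_sum] at h0
  simp only [hterm, norm_tuplePow_single ha e T hT] at h0
  have hsum : ∑ j ∈ Finset.range (k + 1), (-1) ^ j * (k.choose j : ℝ) *
      (if j ≤ N then a (N - j) / a N else 0) = backDiff^[k] a N / a N := by
    rw [backDiff_iterate, Finset.sum_div]
    trans ∑ j ∈ Finset.range (k + 1 + (N + 1)), (-1) ^ j * (k.choose j : ℝ) *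
      (if j ≤ N then a (N - j) / a N else 0)
    · apply Finset.sum_subset
      · intro j
        simp only [Finset.mem_range]
        omega
      · intro j _ hj
        rw [Finset.mem_range] at hj
        rw [Nat.choose_eq_zero_of_lt (by omega)]
        simp
    · symm
      have : ∀ j ∈ Finset.range (N + 1), (-1) ^ j * (k.choose j : ℝ) * a (N - j) / a N =
          (-1) ^ j * (k.choose j : ℝ) * (if j ≤ N then a (N - j) / a N else 0) := by
        intro j hj
        rw [Finset.mem_range] at hj
        rw [if_pos (by omega), mul_div_assoc]
      rw [Finset.sum_congr rfl this]
      apply Finset.sum_subset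
      · intro j
        simp only [Finset.mem_range]
        omega
      · intro j _ hj
        rw [Finset.mem_range] at hj
        rw [if_neg (by omega), mul_zero]
  suffices h : 0 ≤ backDiff^[k] a N / a N by
    rw [← div_mul_cancel₀ (backDiff^[k] a N) (ha N).ne']
    exact mul_nonneg h (ha N).le
  rw [← hsum]
  refine h0.trans_eq ?_
  -- Reindex the surviving terms `β = j e₀` by `j`.
  symm
  refine Finset.sum_of_injOn (fun j => (Pi.single 0 j : Fin (m + 1) → ℕ)) ?_ ?_ ?_ ?_
  · intro i _ j _ h
    exact Pi.single_injective 0 h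
  · intro j hj
    have hj' : j ≤ k := by simpa [Nat.lt_succ_iff] using hj
    simp only [Finset.coe_filter, Finset.mem_Iic, Set.mem_ofPred_eq]
    refine ⟨fun i => ?_, ?_⟩
    · refine Fin.cases ?_ (fun i => ?_) i <;> simp [hj']
    · rw [Finset.sum_pi_single']
      simpa using hj'
  · intro β hβ hβ'
    rw [if_neg, mul_zero]
    rintro ⟨h1, -⟩
    apply hβ'
    refine ⟨β 0, ?_, h1.symm⟩
    have := (Finset.mem_Iic.1 (Finset.mem_filter.1 hβ).1) 0
    simpa [Nat.lt_succ_iff] using this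
  · intro j hj
    have hj' : j ≤ k := by simpa [Nat.lt_succ_iff] using hj
    have hp : ∏ i : Fin (m + 1), ((Pi.single 0 j : Fin (m + 1) → ℕ) i).factorial
        = j.factorial := by
      rw [Fin.prod_univ_succ]
      simp
    have hs : ∑ i : Fin (m + 1), (Pi.single 0 j : Fin (m + 1) → ℕ) i = j := by
      rw [Finset.sum_pi_single']
      simp
    simp only [hp, hs, Pi.single_eq_same, true_and]
    rw [Nat.cast_choose ℝ hj']

end Shift

/-- Corollary 4.3: if the backward weighted shift tuple associated with
`ρ(α) = a(|α|)·|α|!/α!` is `n`-hypercontractive, then `a(i−1)/a(i) ≤ i/(i+n−1)` for all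
`i ≥ 1`. -/
theorem stmt_8 (m n : ℕ) (hm : 2 ≤ m) (hn : 1 ≤ n)
    (a : ℕ → ℝ) (ha : ∀ i, 0 < a i)
    {H : Type*} [NormedAddCommGroup H] [InnerProductSpace ℂ H] [CompleteSpace H]
    (e : HilbertBasis (Fin m → ℕ) ℂ H)
    (T : Fin m → H →L[ℂ] H)
    (hTcomm : ∀ i j, T i ∘L T j = T j ∘L T i)
    (hT : ∀ (α : Fin m → ℕ) (i : Fin m),
      T i (e α) = if α i = 0 then 0
        else (Real.sqrt (rhoHat m a (α - Pi.single i 1) / rhoHat m a α) : ℂ) •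
          e (α - Pi.single i 1))
    (hyp : IsNHypercontractive T n) :
    ∀ i : ℕ, 1 ≤ i → a (i - 1) / a i ≤ (i : ℝ) / ((i : ℝ) + (n : ℝ) - 1) := by
  intro i hi
  obtain ⟨m, rfl⟩ : ∃ m', m = m' + 1 := ⟨m - 1, by omega⟩
  obtain ⟨k, rfl⟩ : ∃ k, n = k + 1 := ⟨n - 1, by omega⟩
  obtain ⟨i, rfl⟩ : ∃ i', i = i' + 1 := ⟨i - 1, by omega⟩
  have h := ratio_of_backDiff k a
    (fun N => backDiff_nonneg ha e T hT (k + 1) (hyp (k + 1) hn le_rfl) N) i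
  rw [Nat.add_sub_cancel]
  push_cast
  have hpos : (0 : ℝ) < (i : ℝ) + 1 + k := by positivity
  rw [div_le_div_iff₀ (ha _) (by linarith)]
  linarith
end

section
/- Let m ≥ 2 be an integer, let ρ : ℕ^m → (0,∞), and let T = (T_1,…,T_m) be the associated m-tuple of backward weighted shifts on H. Then there exists an integer k ≥ 1 such that the operator Δ_T^{(k)} is not positive; in other words, T cannot be n-hypercontractive for every positive integer n. -/
/-!
Test positivity of `Δ_T^{(k)}` on the basis vector `e_α` with `α = (1, 0, …, 0)`. Every `T^β` with
`β ∉ {0, α}` kills this vector, because some factor `T_j ^ β_j` does and the factors commute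
(`list_prod_apply_eq_zero`). Hence `⟪Δ_T^{(k)} e_α, e_α⟫ = 1 - k · ρ(0) / ρ(α)`, which is negative
as soon as `k > ρ(α) / ρ(0)`.
-/

open scoped BigOperators

theorem list_prod_apply_eq_zero {H : Type*} [NormedAddCommGroup H] [InnerProductSpace ℂ H]
    (a : H →L[ℂ] H) (v : H) (hav : a v = 0) :
    ∀ L : List (H →L[ℂ] H), (∀ b ∈ L, Commute a b) → a ∈ L → L.prod v = 0
  | [], _, h => by simp at h
  | b :: L, hc, h => by
    rw [List.prod_cons, mul_apply_eq_comp]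
    rcases List.mem_cons.1 h with rfl | h
    · have hcomm : Commute a L.prod :=
        Commute.list_prod_right L a fun b hb => hc b (List.mem_cons_of_mem _ hb)
      rw [← mul_apply_eq_comp, hcomm.eq, mul_apply_eq_comp, hav, map_zero]
    · rw [list_prod_apply_eq_zero a v hav L (fun b hb => hc b (List.mem_cons_of_mem _ hb)) h,
        map_zero]

theorem tuplePow_apply_eq_zero {m : ℕ} {H : Type*} [NormedAddCommGroup H]
    [InnerProductSpace ℂ H] (T : Fin m → H →L[ℂ] H)
    (hTcomm : ∀ i j, T i ∘L T j = T j ∘L T i) (β : Fin m → ℕ) (v : H) (j : Fin m)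
    (h : (T j ^ β j) v = 0) : tuplePow T β v = 0 := by
  refine list_prod_apply_eq_zero (T j ^ β j) v h _ ?_ ?_
  · intro b hb
    obtain ⟨i, rfl⟩ := List.mem_ofFn' _ _ |>.1 hb
    exact Commute.pow_pow (hTcomm j i) _ _
  · exact (List.mem_ofFn' _ _).2 ⟨j, rfl⟩

theorem tuplePow_zero {m : ℕ} {H : Type*} [NormedAddCommGroup H]
    [InnerProductSpace ℂ H] (T : Fin m → H →L[ℂ] H) : tuplePow T 0 = 1 := by
  simp [tuplePow]

theorem tuplePow_single_zero {n : ℕ} {H : Type*} [NormedAddCommGroup H]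
    [InnerProductSpace ℂ H] (T : Fin (n + 1) → H →L[ℂ] H) :
    tuplePow T (Pi.single 0 1) = T 0 := by
  simp [tuplePow, List.ofFn_succ]

/-- The quadratic form of `Δ_T^{(k)}` in terms of the norms `‖T^β v‖`. -/
theorem re_inner_deltaOp {m : ℕ} {H : Type*} [NormedAddCommGroup H]
    [InnerProductSpace ℂ H] [CompleteSpace H] (T : Fin m → H →L[ℂ] H) (k : ℕ) (v : H) :
    (deltaOp T k).reApplyInnerSelf v =
      ∑ β ∈ (Finset.Iic (fun _ => k : Fin m → ℕ)).filter (fun β => ∑ i, β i ≤ k),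
        ((-1 : ℝ) ^ (∑ i, β i) *
          ((k.factorial : ℝ) /
            (((∏ i, (β i).factorial : ℕ) : ℝ) * ((k - ∑ i, β i).factorial : ℝ)))) *
          ‖tuplePow T β v‖ ^ 2 := by
  rw [ContinuousLinearMap.reApplyInnerSelf_apply, deltaOp, sum_apply,
    sum_inner, map_sum]
  refine Finset.sum_congr rfl fun β _ => ?_
  rw [smul_apply, inner_smul_left, ContinuousLinearMap.comp_apply,
    ContinuousLinearMap.adjoint_inner_left, inner_self_eq_norm_sq_to_K, Complex.conj_ofReal]
  rw [RCLike.re_eq_complex_re, Complex.re_ofReal_mul]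
  congr 1
  norm_cast

/-- Corollary 4.4 (reformulated): for `m ≥ 2`, no commuting `m`-tuple of backward weighted
shifts can be `n`-hypercontractive for every `n`; i.e. some defect operator `Δ_T^{(k)}`
fails to be positive. -/
theorem stmt_9 (m : ℕ) (hm : 2 ≤ m)
    {H : Type*} [NormedAddCommGroup H] [InnerProductSpace ℂ H] [CompleteSpace H]
    (e : HilbertBasis (Fin m → ℕ) ℂ H)
    (ρ : (Fin m → ℕ) → ℝ) (hρ : ∀ α, 0 < ρ α)
    (T : Fin m → H →L[ℂ] H)
    (hTcomm : ∀ i j, T i ∘L T j = T j ∘L T i)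
    (hT : ∀ (α : Fin m → ℕ) (i : Fin m),
      T i (e α) = if α i = 0 then 0
        else (Real.sqrt (ρ (α - Pi.single i 1) / ρ α) : ℂ) • e (α - Pi.single i 1)) :
    ∃ k : ℕ, 1 ≤ k ∧ ¬ (deltaOp T k).IsPositive := by
  obtain ⟨n, rfl⟩ : ∃ n, m = n + 1 := ⟨m - 1, by omega⟩
  set α : Fin (n + 1) → ℕ := Pi.single 0 1 with hα
  have hα0 : α ≠ 0 := by simp [hα]
  have hTα : T 0 (e α) = (Real.sqrt (ρ 0 / ρ α) : ℂ) • e 0 := by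
    rw [hT]
    simp [hα]
  have hT0 : ∀ i, T i (e 0) = 0 := fun i => by rw [hT]; simp
  have hnorm : ‖T 0 (e α)‖ ^ 2 = ρ 0 / ρ α := by
    rw [hTα, norm_smul, e.orthonormal.norm_eq_one, mul_one, Complex.norm_real, Real.norm_eq_abs, sq_abs,
      Real.sq_sqrt (div_pos (hρ _) (hρ _)).le]
  have hvanish : ∀ β, β ≠ 0 → β ≠ α → tuplePow T β (e α) = 0 := by
    intro β h0 h1
    by_cases hj : ∃ j, j ≠ 0 ∧ β j ≠ 0
    · obtain ⟨j, hj0, hβ⟩ := hj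
      refine tuplePow_apply_eq_zero T hTcomm β _ j ?_
      obtain ⟨r, hr⟩ := Nat.exists_eq_succ_of_ne_zero hβ
      rw [hr, Nat.succ_eq_add_one, pow_succ, mul_apply_eq_comp, hT]
      simp [hα, hj0]
    · push Not at hj
      refine tuplePow_apply_eq_zero T hTcomm β _ 0 ?_
      have hβ : β = Pi.single 0 (β 0) := by
        funext j
        by_cases h : j = 0
        · subst h; simp
        · simp [h, hj j h]
      have hb0 : β 0 ≠ 0 := fun h => h0 (by rw [hβ, h]; simp)
      have hb1 : β 0 ≠ 1 := fun h => h1 (by rw [hβ, h])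
      obtain ⟨r, hr⟩ : ∃ r, β 0 = r + 1 + 1 := ⟨β 0 - 2, by omega⟩
      rw [hr, pow_succ, pow_succ, mul_apply_eq_comp, mul_apply_eq_comp,
        hTα, map_smul, hT0]
      simp
  obtain ⟨k, hk⟩ := exists_nat_gt (ρ α / ρ 0)
  have hk1 : 1 ≤ k := by
    have h : (0 : ℝ) < k := (div_pos (hρ _) (hρ _)).trans hk
    exact_mod_cast h
  refine ⟨k, hk1, fun hpos => ?_⟩
  have hnn : 0 ≤ (deltaOp T k).reApplyInnerSelf (e α) := hpos.re_inner_nonneg_left _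
  have hsumα : ∑ i, α i = 1 := by simp [hα]
  have hfacα : ∏ i, (α i).factorial = 1 := by
    refine Finset.prod_eq_one fun i _ => ?_
    by_cases h : i = 0 <;> simp [hα, h]
  have hsub : ({0, α} : Finset (Fin (n + 1) → ℕ)) ⊆
      (Finset.Iic (fun _ => k : Fin (n + 1) → ℕ)).filter (fun β => ∑ i, β i ≤ k) := by
    intro β hβ
    rw [Finset.mem_insert, Finset.mem_singleton] at hβ
    rw [Finset.mem_filter, Finset.mem_Iic]
    rcases hβ with rfl | rfl
    · exact ⟨fun i => Nat.zero_le _, by simp⟩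
    · refine ⟨fun i => ?_, hsumα.le.trans hk1⟩
      exact (Finset.single_le_sum (f := α) (fun _ _ => Nat.zero_le _) (Finset.mem_univ i)).trans
        (hsumα.le.trans hk1)
  rw [re_inner_deltaOp, ← Finset.sum_subset hsub, Finset.sum_pair hα0.symm, tuplePow_zero,
    tuplePow_single_zero, hnorm, hsumα, hfacα] at hnn
  · have hkf : (k.factorial : ℝ) = k * ((k - 1).factorial : ℝ) := by
      exact_mod_cast (Nat.mul_factorial_pred (by omega)).symm
    have h1 : (k.factorial : ℝ) ≠ 0 := by positivity
    have h2 : ((k - 1).factorial : ℝ) ≠ 0 := by positivity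
    have hcoef : (k.factorial : ℝ) / ((k - 1).factorial : ℝ) = k := by
      rw [hkf]; field_simp
    simp [e.orthonormal.norm_eq_one, h1, hcoef] at hnn
    have h3 : 1 < k * (ρ 0 / ρ α) := by
      rw [div_lt_iff₀ (hρ 0)] at hk
      rw [← mul_div_assoc, lt_div_iff₀ (hρ α)]
      linarith
    linarith
  · intro β _ hβ
    rw [Finset.mem_insert, Finset.mem_singleton, not_or] at hβ
    rw [hvanish β hβ.1 hβ.2]
    simp
end

section
/- Let n ≥ 1 be an integer and let a : ℕ → (0,∞) be a positive sequence. Suppose there exist constants m', M' > 0 and an integer K ≥ n−1 such that for all k ≥ K, m' ≤ Σ_{i=0}^{n−1} (−1)^i · C(n−1, i) · a(k−i) ≤ M'. Then there exist constants c_1, c_2 > 0 and an integer K' ≥ 1 such that for all k ≥ K', c_1 · k^{n−1} ≤ a(k) ≤ c_2 · k^{n−1}. -/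
open scoped BigOperators

/-!
Put `d = n - 1`. The alternating sum in the hypothesis is the `d`-th forward difference of `a`
at `k - d`, so the claim says that a sequence whose `d`-th difference is eventually pinched between
two positive constants grows exactly like `k ^ d`. This follows by induction on `d`
(`growth_of_fwdDiff`): if `Δ b` is comparable to `k ^ d`, then, since
`k ^ d ≤ (k + 1) ^ (d + 1) - k ^ (d + 1) ≤ C k ^ d`, summing shows that `b` is comparable to
`k ^ (d + 1)` up to an additive constant, and that constant is absorbed for large `k`.
-/

lemma exists_succ_pow_le (d : ℕ) : ∃ C : ℝ, 0 < C ∧ ∀ x : ℝ, 1 ≤ x →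
    (x + 1) ^ (d + 1) ≤ x ^ (d + 1) + C * x ^ d := by
  induction d with
  | zero => exact ⟨1, one_pos, fun x _ => by simp⟩
  | succ d ih =>
    obtain ⟨C, hC, h⟩ := ih
    refine ⟨2 * C + 1, by positivity, fun x hx => ?_⟩
    have h1 : (x + 1) * (x + 1) ^ (d + 1) ≤ (x + 1) * (x ^ (d + 1) + C * x ^ d) :=
      mul_le_mul_of_nonneg_left (h x hx) (by linarith)
    have h2 : C * x ^ d * 1 ≤ C * x ^ d * x := mul_le_mul_of_nonneg_left hx (by positivity)
    calc (x + 1) ^ (d + 1 + 1) = (x + 1) * (x + 1) ^ (d + 1) := by ring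
      _ ≤ (x + 1) * (x ^ (d + 1) + C * x ^ d) := h1
      _ = x ^ (d + 1 + 1) + x ^ (d + 1) + C * x ^ d * x + C * x ^ d * 1 := by ring
      _ ≤ x ^ (d + 1 + 1) + x ^ (d + 1) + C * x ^ d * x + C * x ^ d * x := by linarith
      _ = x ^ (d + 1 + 1) + (2 * C + 1) * x ^ (d + 1) := by ring

lemma pow_succ_add_pow_le (d : ℕ) (x : ℝ) (hx : 0 ≤ x) :
    x ^ (d + 1) + x ^ d ≤ (x + 1) ^ (d + 1) := by
  have h : x ^ d ≤ (x + 1) ^ d := by gcongr; linarith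
  calc x ^ (d + 1) + x ^ d = x ^ d * (x + 1) := by ring
    _ ≤ (x + 1) ^ d * (x + 1) := by gcongr
    _ = (x + 1) ^ (d + 1) := by ring

/-- A sequence whose `d`-th forward difference is eventually pinched between two positive
constants is eventually comparable to `k ^ d`. -/
lemma growth_of_fwdDiff (d : ℕ) : ∀ (b : ℕ → ℝ) (m M : ℝ) (K : ℕ), 0 < m → 0 < M →
    (∀ k, K ≤ k → m ≤ (fwdDiff 1)^[d] b k ∧ (fwdDiff 1)^[d] b k ≤ M) →
    ∃ c₁ c₂ : ℝ, 0 < c₁ ∧ 0 < c₂ ∧ ∃ K' : ℕ, 1 ≤ K' ∧ ∀ k, K' ≤ k →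
      c₁ * (k : ℝ) ^ d ≤ b k ∧ b k ≤ c₂ * (k : ℝ) ^ d := by
  induction d with
  | zero =>
    intro b m M K hm hM h
    refine ⟨m, M, hm, hM, K + 1, by omega, fun k hk => ?_⟩
    simpa using h k (by omega)
  | succ d ih =>
    intro b m M K hm hM h
    obtain ⟨c₁, c₂, hc₁, hc₂, L, hL, hb⟩ := ih (fwdDiff 1 b) m M K hm hM
      (fun k hk => by simpa only [Function.iterate_succ_apply] using h k hk)
    obtain ⟨C, hC, hpow⟩ := exists_succ_pow_le d
    -- `b k - (c₁ / C) k ^ (d + 1)` is nondecreasing and `b k - c₂ k ^ (d + 1)` nonincreasing.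
    have hlow : ∀ k, L ≤ k → b L - c₁ / C * (L : ℝ) ^ (d + 1) ≤
        b k - c₁ / C * (k : ℝ) ^ (d + 1) := by
      intro k hk
      induction k, hk using Nat.le_induction with
      | base => exact le_rfl
      | succ k hk ih' =>
        have h1 := (hb k hk).1
        have h2 := mul_le_mul_of_nonneg_left (hpow k (by exact_mod_cast hL.trans hk))
          (div_pos hc₁ hC).le
        have h3 : c₁ / C * ((k : ℝ) ^ (d + 1) + C * (k : ℝ) ^ d) =
            c₁ / C * (k : ℝ) ^ (d + 1) + c₁ * (k : ℝ) ^ d := by field_simp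
        simp only [fwdDiff] at h1
        push_cast
        linarith
    have hup : ∀ k, L ≤ k → b k - c₂ * (k : ℝ) ^ (d + 1) ≤
        b L - c₂ * (L : ℝ) ^ (d + 1) := by
      intro k hk
      induction k, hk using Nat.le_induction with
      | base => exact le_rfl
      | succ k hk ih' =>
        have h1 := (hb k hk).2
        have h2 := mul_le_mul_of_nonneg_left
          (pow_succ_add_pow_le d k (Nat.cast_nonneg k)) hc₂.le
        simp only [fwdDiff] at h1
        push_cast
        linarith
    set D := b L - c₁ / C * (L : ℝ) ^ (d + 1)
    set E := b L - c₂ * (L : ℝ) ^ (d + 1)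
    have he : 0 < c₁ / C / 2 := by positivity
    -- From `N` on, half of the lower main term already exceeds the constant `|D|`.
    obtain ⟨N, hN⟩ := exists_nat_ge (|D| / (c₁ / C / 2))
    refine ⟨c₁ / C / 2, c₂ + |E|, he, by positivity, L + N, by omega, fun k hk => ?_⟩
    have hk1 : (1 : ℝ) ≤ k := by exact_mod_cast (by omega : 1 ≤ k)
    have hkN : (N : ℝ) ≤ k := by exact_mod_cast (by omega : N ≤ k)
    have hkp : (k : ℝ) ≤ (k : ℝ) ^ (d + 1) := le_self_pow₀ hk1 (by omega)
    constructor
    · have h1 := hlow k (by omega)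
      have h2 : |D| ≤ (k : ℝ) ^ (d + 1) * (c₁ / C / 2) :=
        (div_le_iff₀ he).1 (by linarith)
      have h3 := neg_abs_le D
      linarith
    · have h1 := hup k (by omega)
      have h2 : |E| * 1 ≤ |E| * (k : ℝ) ^ (d + 1) :=
        mul_le_mul_of_nonneg_left (by linarith) (abs_nonneg E)
      have h3 := le_abs_self E
      linarith

lemma sum_eq_fwdDiff (d : ℕ) (a : ℕ → ℝ) (j : ℕ) :
    ∑ i ∈ Finset.range (d + 1), (-1 : ℝ) ^ i * (Nat.choose d i : ℝ) * a (j + d - i) =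
      (fwdDiff 1)^[d] a j := by
  rw [fwdDiff_iter_eq_sum_shift, ← Finset.sum_range_reflect]
  refine Finset.sum_congr rfl fun i hi => ?_
  have hi' : i ≤ d := by simpa [Nat.lt_succ_iff] using hi
  rw [show d + 1 - 1 - i = d - i by omega, Nat.choose_symm hi',
    show j + d - (d - i) = j + i by omega]
  simp

/-- The "Claim" in the proof of Theorem 3.3: if a positive sequence `a` satisfies
`m' ≤ Σ_{i=0}^{n−1} (−1)^i C(n−1,i) a(k−i) ≤ M'` for all large `k`, then
`a(k) = O(k^{n−1})` and `k^{n−1} = O(a(k))` as `k → ∞`. -/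
theorem stmt_10 (n : ℕ) (hn : 1 ≤ n) (a : ℕ → ℝ) (ha : ∀ k, 0 < a k)
    (m' M' : ℝ) (hm' : 0 < m') (hM' : 0 < M') (K : ℕ) (hK : n - 1 ≤ K)
    (h : ∀ k, K ≤ k →
      m' ≤ (∑ i ∈ Finset.range n, (-1 : ℝ) ^ i * (Nat.choose (n - 1) i : ℝ) * a (k - i)) ∧
      (∑ i ∈ Finset.range n, (-1 : ℝ) ^ i * (Nat.choose (n - 1) i : ℝ) * a (k - i)) ≤ M') :
    ∃ c₁ c₂ : ℝ, 0 < c₁ ∧ 0 < c₂ ∧ ∃ K' : ℕ, 1 ≤ K' ∧ ∀ k, K' ≤ k →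
      c₁ * (k : ℝ) ^ (n - 1) ≤ a k ∧ a k ≤ c₂ * (k : ℝ) ^ (n - 1) := by
  obtain ⟨d, rfl⟩ : ∃ d, n = d + 1 := ⟨n - 1, by omega⟩
  simp only [Nat.add_sub_cancel] at h ⊢
  refine growth_of_fwdDiff d a m' M' K hm' hM' fun j hj => ?_
  rw [← sum_eq_fwdDiff]
  exact h (j + d) (by omega)
end

section
/- Let n ≥ 1 be an integer, let a : ℕ → ℝ, and for each l ∈ ℕ set b_l = Σ_{j=0}^{min(l,n)} (−1)^j · C(n, j) · a(l−j). Suppose b_l ≥ 0 for every l, that the series Σ_{i=0}^{∞} a(i) x^i converges for every x ∈ [0,1), and that there is a constant M with (1−x)^n · Σ_{i=0}^{∞} a(i) x^i ≤ M for all x ∈ [0,1). Then for every integer k ≥ n−1, Σ_{i=0}^{n−1} (−1)^i · C(n−1, i) · a(k−i) ≤ M. -/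
/-!
Put `A = Σ a(i) X^i`. The numbers `b_l` are the coefficients of `(1 - X)^n A`, and the sum to be
bounded is the `k`-th coefficient of `(1 - X)^(n-1) A`. Multiplication by `1 - X` takes backward
differences of coefficients, so that `k`-th coefficient telescopes to `b_0 + ⋯ + b_k`
(`sum_diffCoeff_succ`). For `0 ≤ x < 1` the series `Σ b_l x^l` converges to `(1 - x)^n A(x) ≤ M`
(`hasSum_diffCoeff`); since all `b_l ≥ 0`, its partial sums satisfy `Σ_{l ≤ k} b_l x^l ≤ M`, and
letting `x → 1` from the left gives the bound.
-/

open PowerSeries in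
/-- The `l`-th coefficient of the formal power series `(1 - X)^m * Σ a(i) X^i`. -/
noncomputable def diffCoeff (a : ℕ → ℝ) (m l : ℕ) : ℝ :=
  coeff l ((1 - X) ^ m * PowerSeries.mk a)

lemma diffCoeff_zero_left (a : ℕ → ℝ) (l : ℕ) : diffCoeff a 0 l = a l := by
  simp [diffCoeff]

lemma diffCoeff_succ_zero (a : ℕ → ℝ) (m : ℕ) : diffCoeff a (m + 1) 0 = diffCoeff a m 0 := by
  simp [diffCoeff]

lemma diffCoeff_succ_succ (a : ℕ → ℝ) (m l : ℕ) :
    diffCoeff a (m + 1) (l + 1) = diffCoeff a m (l + 1) - diffCoeff a m l := by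
  simp only [diffCoeff, pow_succ', mul_assoc]
  rw [sub_mul, one_mul, map_sub, PowerSeries.coeff_succ_X_mul]

lemma sum_diffCoeff_succ (a : ℕ → ℝ) (m k : ℕ) :
    ∑ l ∈ Finset.range (k + 1), diffCoeff a (m + 1) l = diffCoeff a m k := by
  induction k with
  | zero => simp [diffCoeff_succ_zero]
  | succ k ih => rw [Finset.sum_range_succ, ih, diffCoeff_succ_succ]; ring

lemma diffCoeff_eq_sum (a : ℕ → ℝ) (m l : ℕ) :
    diffCoeff a m l = ∑ j ∈ Finset.range (min l m + 1),
      (-1 : ℝ) ^ j * (Nat.choose m j : ℝ) * a (l - j) := by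
  have hexp : ((1 - PowerSeries.X : PowerSeries ℝ)) ^ m * PowerSeries.mk a =
      ∑ j ∈ Finset.range (m + 1), PowerSeries.C ((-1 : ℝ) ^ j * (Nat.choose m j : ℝ)) *
        (PowerSeries.X ^ j * PowerSeries.mk a) := by
    rw [sub_eq_neg_add, add_pow, Finset.sum_mul]
    refine Finset.sum_congr rfl fun j _ => ?_
    rw [neg_pow]
    simp only [one_pow, map_mul, map_pow, map_neg, map_one, map_natCast]
    ring
  rw [diffCoeff, hexp, map_sum]
  simp only [PowerSeries.coeff_C_mul, PowerSeries.coeff_X_pow_mul', PowerSeries.coeff_mk]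
  -- The terms with `j > l` vanish, which truncates the range at `min l m`.
  symm
  refine Finset.sum_subset_zero_on_sdiff ?_ ?_ ?_
  · intro j hj
    simp only [Finset.mem_range] at hj ⊢
    omega
  · intro j hj
    simp only [Finset.mem_sdiff, Finset.mem_range] at hj
    rw [if_neg (by omega), mul_zero]
  · intro j hj
    simp only [Finset.mem_range] at hj
    rw [if_pos (by omega)]

lemma hasSum_diffCoeff (a : ℕ → ℝ) (x : ℝ) (h : Summable fun i : ℕ => a i * x ^ i) (m : ℕ) :
    HasSum (fun l => diffCoeff a m l * x ^ l) ((1 - x) ^ m * ∑' i : ℕ, a i * x ^ i) := by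
  induction m with
  | zero => simpa [diffCoeff_zero_left] using h.hasSum
  | succ m ih =>
    set S := ∑' i : ℕ, a i * x ^ i
    rw [← hasSum_nat_add_iff' 1] at ih ⊢
    have hshift := (hasSum_nat_add_iff' 1).1 ih
    convert ih.sub (hshift.mul_left x) using 1
    · funext l
      rw [diffCoeff_succ_succ]
      ring
    · simp only [Finset.sum_range_one, diffCoeff_succ_zero]
      ring

/-- Boundedness step in the proof of Theorem 3.3: if the Taylor coefficients
`b_l = Σ_{j=0}^{min(l,n)} (−1)^j C(n,j) a(l−j)` of `(1−x)^n Σ a(i) x^i` are nonnegative,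
the power series `Σ a(i) x^i` converges on `[0,1)`, and `(1−x)^n Σ a(i) x^i ≤ M` there,
then `Σ_{i=0}^{n−1} (−1)^i C(n−1,i) a(k−i) ≤ M` for every `k ≥ n−1`. -/
theorem stmt_14 (n : ℕ) (hn : 1 ≤ n) (a : ℕ → ℝ) (M : ℝ)
    (hb : ∀ l : ℕ, 0 ≤ ∑ j ∈ Finset.range (min l n + 1),
      (-1 : ℝ) ^ j * (Nat.choose n j : ℝ) * a (l - j))
    (hconv : ∀ x : ℝ, 0 ≤ x → x < 1 → Summable fun i : ℕ => a i * x ^ i)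
    (hM : ∀ x : ℝ, 0 ≤ x → x < 1 → (1 - x) ^ n * ∑' i : ℕ, a i * x ^ i ≤ M) :
    ∀ k : ℕ, n - 1 ≤ k →
      (∑ i ∈ Finset.range n, (-1 : ℝ) ^ i * (Nat.choose (n - 1) i : ℝ) * a (k - i)) ≤ M := by
  intro k hk
  obtain ⟨m, rfl⟩ : ∃ m, n = m + 1 := ⟨n - 1, by omega⟩
  simp only [Nat.add_sub_cancel] at hk ⊢
  have hcoeff := diffCoeff_eq_sum a m k
  rw [min_eq_right hk] at hcoeff
  rw [← hcoeff, ← sum_diffCoeff_succ]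
  have hnonneg : ∀ l, 0 ≤ diffCoeff a (m + 1) l := fun l => by
    rw [diffCoeff_eq_sum]
    exact hb l
  have hpartial : ∀ x : ℝ, 0 ≤ x → x < 1 →
      ∑ l ∈ Finset.range (k + 1), diffCoeff a (m + 1) l * x ^ l ≤ M := fun x hx0 hx1 =>
    (sum_le_hasSum _ (fun l _ => mul_nonneg (hnonneg l) (pow_nonneg hx0 l))
      (hasSum_diffCoeff a x (hconv x hx0 hx1) (m + 1))).trans (hM x hx0 hx1)
  have hcont : Continuous fun x : ℝ =>
      ∑ l ∈ Finset.range (k + 1), diffCoeff a (m + 1) l * x ^ l := by fun_prop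
  have hlim := (hcont.tendsto 1).mono_left (nhdsWithin_le_nhds (s := Set.Iio 1))
  simp only [one_pow, mul_one] at hlim
  refine le_of_tendsto hlim ?_
  filter_upwards [Ioo_mem_nhdsLT (zero_lt_one' ℝ)] with x hx
  exact hpartial x hx.1.le hx.2
end

section
/- For all integers m ≥ 2 and n ≥ 1 there exists ρ̃ : ℕ^m → (0,∞) with the following properties, where ρ(α) = (n+|α|−1)!/(α!·(n−1)!): (i) for every w ∈ ℂ^m with |w| < 1 the series K̃(w) = Σ_{α∈ℕ^m} ρ̃(α)·|w^α|² converges and 7/8 < (1−|w|²)^n · K̃(w) < 9/8; (ii) there exists a nonzero α ∈ ℕ^m with Σ_{i : α_i ≥ 1} ρ̃(α−e_i)/ρ̃(α) > |α|/(|α|+n−1); (iii) there do NOT exist constants C_1, C_2 > 0 such that for all α ∈ ℕ^m, all 1 ≤ i ≤ m and all integers l ≥ 0, C_1 ≤ (ρ(α)·ρ̃(α+(l+1)e_i))/(ρ̃(α)·ρ(α+(l+1)e_i)) ≤ C_2. -/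
open scoped BigOperators

/-!
Write `n = N + 1`, `m = M + 2`, and let `δ_k = (k, k, 0, …, 0)`. The weight is
`ρ̃ = ρ + b`, where the bump `b` lives on the diagonal indices `δ_k` and
`b(δ_k) = (1/16) · C(2k+N, N) · 4^k`.

With `x_i = |w_i|²` and `r = ∑ x_i`, the multinomial theorem and the negative binomial series give
`∑ ρ(α) x^α = ∑_d C(d+N, N) r^d = (1-r)^{-n}` (`hasSum_rhoN`). Since `4 x_0 x_1 ≤ r²`, the bump adds
at most `(1/16) ∑_k C(2k+N, N) r^{2k} ≤ (1/16) (1-r)^{-n}` (`bump_series`), which gives (i).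

For (ii) take `α = e_0`: the bump raises `ρ̃(0)` above `ρ(0)` and leaves `ρ̃(e_0) = ρ(e_0)`, while
`ρ` itself satisfies the condition with equality.

For (iii), the ratio with `α = δ_k`, `i = 0`, `l = 0` equals `ρ(δ_k)/ρ̃(δ_k)`, the inverse of
`1 + (1/16) 4^k / C(2k,k)`. It tends to `0` because `C(2k,k)² (2k+1) ≤ 16^k`
(`centralBinom_sq_mul_le`), so no positive lower bound `C₁` exists.
-/

/-- `ρ(α) = (n+|α|−1)!/(α!·(n−1)!)`, the weights of the kernel `(1−⟨z,w⟩)^{−n}`. -/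
noncomputable def rhoN (m n : ℕ) (α : Fin m → ℕ) : ℝ :=
  ((n + (∑ i, α i) - 1).factorial : ℝ) /
    (((∏ i, (α i).factorial : ℕ) : ℝ) * ((n - 1).factorial : ℝ))

/-- The diagonal multi-index `(k, k, 0, …, 0)`. -/
def diagIndex (M k : ℕ) : Fin (M + 2) → ℕ := Fin.cons k (Fin.cons k (fun _ => 0))

/-- The perturbation of `ρ`: it equals `C(2k+N, N) 4^k / 16` at `(k, k, 0, …, 0)` and vanishes at
all other multi-indices. -/
noncomputable def bump (M N : ℕ) : (Fin (M + 2) → ℕ) → ℝ :=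
  Function.extend (diagIndex M) (fun k => 1 / 16 * ((2 * k + N).choose N : ℝ) * 4 ^ k) 0

lemma diagIndex_injective (M : ℕ) : Function.Injective (diagIndex M) := fun a b h => by
  simpa [diagIndex] using congrFun h 0

lemma sum_diagIndex (M k : ℕ) : ∑ i, diagIndex M k i = 2 * k := by
  simp [diagIndex, Fin.sum_univ_succ, two_mul]

lemma bump_diagIndex (M N k : ℕ) :
    bump M N (diagIndex M k) = 1 / 16 * ((2 * k + N).choose N : ℝ) * 4 ^ k :=
  (diagIndex_injective M).extend_apply _ _ _

lemma bump_of_ne (M N : ℕ) (α : Fin (M + 2) → ℕ) (h : α 0 ≠ α 1) : bump M N α = 0 := by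
  refine Function.extend_apply' _ _ _ ?_
  rintro ⟨k, rfl⟩
  exact h rfl

lemma bump_nonneg (M N : ℕ) (α : Fin (M + 2) → ℕ) : 0 ≤ bump M N α := by
  by_cases h : ∃ k, diagIndex M k = α
  · obtain ⟨k, rfl⟩ := h
    rw [bump_diagIndex]
    positivity
  · have : bump M N α = 0 := Function.extend_apply' _ _ _ h
    exact this.ge

lemma rhoN_pos (m n : ℕ) (α : Fin m → ℕ) : 0 < rhoN m n α := by
  have : 0 < ∏ i, (α i).factorial := Finset.prod_pos fun i _ => Nat.factorial_pos _
  unfold rhoN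
  positivity

lemma rhoN_eq (m N : ℕ) (α : Fin m → ℕ) :
    rhoN m (N + 1) α =
      (((∑ i, α i) + N).choose N : ℝ) * (Nat.multinomial Finset.univ α : ℝ) := by
  have hp : 0 < ∏ i, (α i).factorial := Finset.prod_pos fun i _ => Nat.factorial_pos _
  have h1 := Nat.multinomial_spec Finset.univ α
  have h2 := Nat.add_choose_mul_factorial_mul_factorial (∑ i, α i) N
  unfold rhoN
  have h4 : N + 1 + (∑ i, α i) - 1 = (∑ i, α i) + N := by omega
  rw [h4, Nat.add_sub_cancel, div_eq_iff (by positivity)]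
  rw [← h2, ← h1]
  push_cast
  ring

/-- The kernel expansion `∑ ρ(α) x^α = (1 - ∑ x_i)^{-n}`, obtained by grouping by degree. -/
lemma hasSum_rhoN (m N : ℕ) (x : Fin m → ℝ) (hx : ∀ i, 0 ≤ x i) (hr : ∑ i, x i < 1) :
    HasSum (fun α : Fin m → ℕ => rhoN m (N + 1) α * ∏ i, x i ^ α i)
      (1 / (1 - ∑ i, x i) ^ (N + 1)) := by
  have hr0 : 0 ≤ ∑ i, x i := Finset.sum_nonneg fun i _ => hx i
  have hg := hasSum_choose_mul_geometric_of_norm_lt_one (𝕜 := ℝ) N (r := ∑ i, x i)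
    (by rwa [Real.norm_of_nonneg hr0])
  let f : (Fin m → ℕ) → ℝ := fun α => rhoN m (N + 1) α * ∏ i, x i ^ α i
  have hf0 : ∀ α, 0 ≤ f α := fun α =>
    mul_nonneg (rhoN_pos _ _ _).le (Finset.prod_nonneg fun i _ => pow_nonneg (hx i) _)
  let e := Equiv.sigmaFiberEquiv (fun α : Fin m → ℕ => ∑ i, α i)
  have hfib : ∀ d : ℕ, HasSum (fun c : {α : Fin m → ℕ // ∑ i, α i = d} => f (e ⟨d, c⟩))
      (((d + N).choose N : ℝ) * (∑ i, x i) ^ d) := by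
    intro d
    have hset : {α : Fin m → ℕ | ∑ i, α i = d} =
        ((Finset.piAntidiag Finset.univ d : Finset (Fin m → ℕ)) : Set (Fin m → ℕ)) := by
      ext α
      simp [Finset.mem_piAntidiag]
    have key : ∑ α ∈ Finset.piAntidiag Finset.univ d, f α =
        ((d + N).choose N : ℝ) * (∑ i, x i) ^ d := by
      rw [Finset.sum_pow_eq_sum_piAntidiag, Finset.mul_sum]
      refine Finset.sum_congr rfl fun α hα => ?_
      have hα' : ∑ i, α i = d := (Finset.mem_piAntidiag.1 hα).1
      simp only [f, rhoN_eq, hα']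
      ring
    rw [← key]
    have h : HasSum (f ∘ ((↑) : {α : Fin m → ℕ | ∑ i, α i = d} → (Fin m → ℕ)))
        (∑ α ∈ Finset.piAntidiag Finset.univ d, f α) := by
      rw [hset]
      exact Finset.hasSum _ f
    exact h
  have hs : Summable (fun c => f (e c)) := by
    rw [summable_sigma_of_nonneg (fun c => hf0 _)]
    exact ⟨fun d => (hfib d).summable, hg.summable.congr fun d => (hfib d).tsum_eq.symm⟩
  exact (Equiv.hasSum_iff e).1 (HasSum.sigma_of_hasSum hg hfib hs)

lemma prod_pow_diagIndex (M k : ℕ) (x : Fin (M + 2) → ℝ) :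
    ∏ i, x i ^ diagIndex M k i = (x 0 * x 1) ^ k := by
  simp [diagIndex, Fin.prod_univ_succ, mul_pow]

/-- The bump contributes between `0` and `1/16` of the unperturbed kernel. -/
lemma bump_series (M N : ℕ) (x : Fin (M + 2) → ℝ) (hx : ∀ i, 0 ≤ x i) (hr : ∑ i, x i < 1) :
    ∃ s, HasSum (fun α => bump M N α * ∏ i, x i ^ α i) s ∧ 0 ≤ s ∧
      s ≤ 1 / 16 * (1 / (1 - ∑ i, x i) ^ (N + 1)) := by
  have hr0 : 0 ≤ ∑ i, x i := Finset.sum_nonneg fun i _ => hx i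
  set r := ∑ i, x i with hrdef
  have hg := hasSum_choose_mul_geometric_of_norm_lt_one (𝕜 := ℝ) N (r := r)
    (by rwa [Real.norm_of_nonneg hr0])
  let g : ℕ → ℝ := fun d => ((d + N).choose N : ℝ) * r ^ d
  have hg0 : ∀ d, 0 ≤ g d := fun d => by positivity
  have hinj : Function.Injective (fun k : ℕ => 2 * k) := fun a b h => by
    simpa using h
  have hge : Summable (fun k => g (2 * k)) := hg.summable.comp_injective hinj
  have h01 : x 0 + x 1 ≤ r := by
    rw [hrdef, Fin.sum_univ_succ, Fin.sum_univ_succ]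
    have : 0 ≤ ∑ i : Fin M, x i.succ.succ := Finset.sum_nonneg fun i _ => hx _
    have e1 : x (Fin.succ 0) = x 1 := rfl
    linarith
  have h4 : 4 * (x 0 * x 1) ≤ r ^ 2 := by
    nlinarith [sq_nonneg (x 0 - x 1), hx 0, hx 1]
  have h40 : 0 ≤ 4 * (x 0 * x 1) := by
    have := mul_nonneg (hx 0) (hx 1)
    linarith
  let t : ℕ → ℝ := fun k => bump M N (diagIndex M k) * ∏ i, x i ^ diagIndex M k i
  have ht : ∀ k, t k = 1 / 16 * (((2 * k + N).choose N : ℝ) * (4 * (x 0 * x 1)) ^ k) := by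
    intro k
    simp only [t, bump_diagIndex, prod_pow_diagIndex]
    rw [mul_pow 4]
    ring
  have ht0 : ∀ k, 0 ≤ t k := fun k => by
    rw [ht]
    have := pow_nonneg h40 k
    positivity
  have htle : ∀ k, t k ≤ 1 / 16 * g (2 * k) := fun k => by
    rw [ht]
    simp only [g]
    rw [pow_mul]
    gcongr
  have hts : Summable t := Summable.of_nonneg_of_le ht0 htle (hge.mul_left _)
  refine ⟨∑' k, t k, ?_, tsum_nonneg ht0, ?_⟩
  · refine ((diagIndex_injective M).hasSum_iff ?_).1 hts.hasSum
    intro α hα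
    have : bump M N α = 0 := Function.extend_apply' _ _ _ (fun ⟨k, hk⟩ => hα ⟨k, hk⟩)
    rw [this, zero_mul]
  · calc ∑' k, t k ≤ ∑' k, 1 / 16 * g (2 * k) := hts.tsum_le_tsum htle (hge.mul_left _)
      _ = 1 / 16 * ∑' k, g (2 * k) := tsum_mul_left
      _ ≤ 1 / 16 * ∑' d, g d := by
          have := tsum_comp_le_tsum_of_inj hg.summable hg0 hinj
          exact mul_le_mul_of_nonneg_left this (by norm_num)
      _ = _ := by rw [hg.tsum_eq]

/-- A Wallis-type upper bound on the central binomial coefficient. -/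
lemma centralBinom_sq_mul_le (k : ℕ) : k.centralBinom ^ 2 * (2 * k + 1) ≤ 16 ^ k := by
  induction k with
  | zero => simp
  | succ k ih =>
    have h := Nat.succ_mul_centralBinom_succ k
    refine Nat.le_of_mul_le_mul_left ?_ (show 0 < (k + 1) ^ 2 by positivity)
    calc (k + 1) ^ 2 * ((k + 1).centralBinom ^ 2 * (2 * (k + 1) + 1))
        = ((k + 1) * (k + 1).centralBinom) ^ 2 * (2 * k + 3) := by ring
      _ = (k.centralBinom ^ 2 * (2 * k + 1)) * (4 * ((2 * k + 1) * (2 * k + 3))) := by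
          rw [h]; ring
      _ ≤ 16 ^ k * (4 * (4 * (k + 1) ^ 2)) := by
          have h' : (2 * k + 1) * (2 * k + 3) ≤ 4 * (k + 1) ^ 2 := by nlinarith
          exact Nat.mul_le_mul ih (Nat.mul_le_mul_left 4 h')
      _ = (k + 1) ^ 2 * 16 ^ (k + 1) := by ring

lemma rhoN_diagIndex (M N k : ℕ) :
    rhoN (M + 2) (N + 1) (diagIndex M k) =
      ((2 * k + N).choose N : ℝ) * (k.centralBinom : ℝ) := by
  have h1 := Nat.multinomial_spec Finset.univ (diagIndex M k)
  have hprod : ∏ i, (diagIndex M k i).factorial = k.factorial * k.factorial := by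
    simp [diagIndex, Fin.prod_univ_succ]
  have h2 := Nat.add_choose_mul_factorial_mul_factorial k k
  rw [hprod, sum_diagIndex] at h1
  have h3 : Nat.multinomial Finset.univ (diagIndex M k) = k.centralBinom := by
    rw [Nat.centralBinom_eq_two_mul_choose, two_mul]
    refine Nat.eq_of_mul_eq_mul_left (show 0 < k.factorial * k.factorial by positivity) ?_
    rw [h1, two_mul, ← h2]
    ring
  rw [rhoN_eq, sum_diagIndex, h3]

/-- Example 4.5: there exists a weight function `ρ̃` whose kernel diagonal
`K̃(w) = Σ ρ̃(α)|w^α|²` satisfies `7/8 < (1−|w|²)^n K̃(w) < 9/8` on the unit ball, yet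
which violates the `n`-hypercontractivity necessary condition of Theorem 1.4 and the
similarity criterion (bounded weight-product ratios) with respect to
`ρ(α) = (n+|α|−1)!/(α!(n−1)!)`. -/
theorem stmt_17 (m n : ℕ) (hm : 2 ≤ m) (hn : 1 ≤ n) :
    ∃ ρt : (Fin m → ℕ) → ℝ, (∀ α, 0 < ρt α) ∧
      (∀ w : Fin m → ℂ, (∑ i, ‖w i‖ ^ 2) < 1 →
        Summable (fun α : Fin m → ℕ => ρt α * ∏ i, ‖w i‖ ^ (2 * α i)) ∧
        7 / 8 < (1 - ∑ i, ‖w i‖ ^ 2) ^ n *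
            ∑' α : Fin m → ℕ, ρt α * ∏ i, ‖w i‖ ^ (2 * α i) ∧
        (1 - ∑ i, ‖w i‖ ^ 2) ^ n *
            (∑' α : Fin m → ℕ, ρt α * ∏ i, ‖w i‖ ^ (2 * α i)) < 9 / 8) ∧
      (∃ α : Fin m → ℕ, α ≠ 0 ∧
        ((∑ i, α i : ℕ) : ℝ) / (((∑ i, α i : ℕ) : ℝ) + (n : ℝ) - 1) <
          ∑ i ∈ Finset.univ.filter (fun i : Fin m => 1 ≤ α i),
            ρt (α - Pi.single i 1) / ρt α) ∧
      ¬ ∃ C₁ C₂ : ℝ, 0 < C₁ ∧ 0 < C₂ ∧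
          ∀ (α : Fin m → ℕ) (i : Fin m) (l : ℕ),
            C₁ ≤ (rhoN m n α * ρt (α + (l + 1) • Pi.single i 1)) /
                (ρt α * rhoN m n (α + (l + 1) • Pi.single i 1)) ∧
            (rhoN m n α * ρt (α + (l + 1) • Pi.single i 1)) /
                (ρt α * rhoN m n (α + (l + 1) • Pi.single i 1)) ≤ C₂ := by
  obtain ⟨M, rfl⟩ := Nat.exists_eq_add_of_le' hm
  obtain ⟨N, rfl⟩ := Nat.exists_eq_add_of_le' hn
  refine ⟨fun α => rhoN (M + 2) (N + 1) α + bump M N α,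
    fun α => add_pos_of_pos_of_nonneg (rhoN_pos _ _ _) (bump_nonneg _ _ _), ?_, ?_, ?_⟩
  · intro w hw
    have h1 := hasSum_rhoN (M + 2) N (fun i => ‖w i‖ ^ 2) (fun i => by positivity) hw
    obtain ⟨s, h2, hs0, hs1⟩ :=
      bump_series M N (fun i => ‖w i‖ ^ 2) (fun i => by positivity) hw
    have h3 := h1.add h2
    simp only [← add_mul, ← pow_mul] at h3
    have hpos : 0 < (1 - ∑ i, ‖w i‖ ^ 2) ^ (N + 1) := pow_pos (by linarith) _
    refine ⟨h3.summable, ?_⟩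
    rw [h3.tsum_eq, mul_add, mul_one_div_cancel hpos.ne']
    have hs2 := mul_le_mul_of_nonneg_left hs1 hpos.le
    rw [mul_left_comm, mul_one_div_cancel hpos.ne'] at hs2
    have hs3 := mul_nonneg hpos.le hs0
    constructor <;> linarith
  · refine ⟨Pi.single 0 1, by simp, ?_⟩
    have hfilter : Finset.univ.filter
        (fun i : Fin (M + 2) => 1 ≤ (Pi.single 0 1 : Fin (M + 2) → ℕ) i) = {0} := by
      ext i
      by_cases h : i = 0 <;> simp [h]
    have hsum : ∑ i, (Pi.single 0 1 : Fin (M + 2) → ℕ) i = 1 := by simp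
    have hprod : ∏ i, ((Pi.single 0 1 : Fin (M + 2) → ℕ) i).factorial = 1 := by
      simp [Fin.prod_univ_succ]
    have hd0 : (0 : Fin (M + 2) → ℕ) = diagIndex M 0 := by
      funext i
      refine Fin.cases rfl (fun j => Fin.cases rfl (fun _ => rfl) j) i
    have hr1 : rhoN (M + 2) (N + 1) (Pi.single 0 1) = N + 1 := by
      unfold rhoN
      rw [hsum, hprod]
      have : ((N.factorial : ℕ) : ℝ) ≠ 0 := by positivity
      simp only [Nat.add_sub_cancel, Nat.factorial_succ]
      push_cast
      field_simp
    rw [hfilter, Finset.sum_singleton, hsum, tsub_self]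
    beta_reduce
    rw [hr1, bump_of_ne M N (Pi.single 0 1) (by simp), hd0, rhoN_diagIndex, bump_diagIndex]
    have hN : (0 : ℝ) < N + 1 := by positivity
    simp only [Nat.cast_one, Nat.cast_add, mul_zero, zero_add, Nat.choose_self,
      Nat.centralBinom_zero, add_zero, pow_zero]
    rw [show (1 : ℝ) + (N + 1) - 1 = N + 1 by ring]
    gcongr
    norm_num
  · rintro ⟨C₁, C₂, hC₁, -, h⟩
    -- Beyond this `k`, the growth `4^k / C(2k,k) ≥ √(2k+1)` beats `16 / C₁`.
    obtain ⟨k, hk⟩ := exists_nat_gt ((16 / C₁) ^ 2)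
    have h1 := (h (diagIndex M k) 0 0).1
    have hne : bump M N (diagIndex M k + (0 + 1) • Pi.single 0 1) = 0 :=
      bump_of_ne _ _ _ (by simp [diagIndex])
    simp only [hne, add_zero] at h1
    rw [mul_div_mul_right _ _ (rhoN_pos _ _ _).ne', rhoN_diagIndex, bump_diagIndex] at h1
    have hc : (0 : ℝ) < (2 * k + N).choose N := by
      exact_mod_cast Nat.choose_pos (by omega)
    have hb : (0 : ℝ) < k.centralBinom := by exact_mod_cast k.centralBinom_pos
    rw [le_div_iff₀ (by positivity)] at h1
    have h2 : C₁ * (k.centralBinom + 1 / 16 * 4 ^ k) ≤ (k.centralBinom : ℝ) := by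
      refine le_of_mul_le_mul_left ?_ hc
      linarith
    have h3 : (4 : ℝ) ^ k ≤ 16 / C₁ * k.centralBinom := by
      rw [div_mul_eq_mul_div, le_div_iff₀ hC₁]
      nlinarith [mul_pos hC₁ hb]
    have h4 : ((k.centralBinom : ℝ)) ^ 2 * (2 * k + 1) ≤ 16 ^ k := by
      exact_mod_cast centralBinom_sq_mul_le k
    have h5 : (16 : ℝ) ^ k = (4 ^ k) ^ 2 := by
      rw [← pow_mul, mul_comm, pow_mul]
      norm_num
    have h6 : ((4 : ℝ) ^ k) ^ 2 ≤ (16 / C₁ * k.centralBinom) ^ 2 := by gcongr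
    rw [mul_pow] at h6
    have h7 : (0 : ℝ) < (k.centralBinom : ℝ) ^ 2 := by positivity
    have h8 : (2 * k + 1 : ℝ) ≤ (16 / C₁) ^ 2 := by
      refine le_of_mul_le_mul_left ?_ h7
      linarith
    have : (0 : ℝ) ≤ k := by positivity
    linarith
end

section
/- Let m ≥ 1 and k ≥ 1 be integers, let a : ℕ → (0,∞), and define ρ̂ : ℕ^m → (0,∞) by ρ̂(α) = a(|α|)·|α|!/α!. Then for every β ∈ ℕ^m with |β| ≥ k, Σ_{α ≤ β, |α| ≤ k} (−1)^{|α|} · (k!/(α!·(k−|α|)!)) · ρ̂(β−α)/ρ̂(β) = (1/a(|β|)) · Σ_{i=0}^{k} (−1)^i · C(k, i) · a(|β|−i). -/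
/-!
Write `N = |β|`. For `α ≤ β`, the quotient `ρ̂(β - α) / ρ̂(β)` equals
`a(N - |α|) (N - |α|)! / (a(N) N!) · β! / (β - α)!`, and `β! / (α! (β - α)!) = ∏ C(β_j, α_j)`, so each
summand is `∏ C(β_j, α_j)` times a factor depending only on `|α|`. Grouping the sum by `i = |α|`
and applying the multivariate Vandermonde identity `∑_{|α| = i} ∏ C(β_j, α_j) = C(N, i)`
(`sum_prod_choose`) leaves a single sum over `i ≤ k`, in which the factorials recombine to `C(k, i)`.
-/

open scoped BigOperators

/-- Multivariate Vandermonde identity: compare the coefficients of `X ^ n` in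
`(1 + X) ^ |β| = ∏ j, (1 + X) ^ β j`. -/
lemma sum_prod_choose {m : ℕ} (β : Fin m → ℕ) (n : ℕ) :
    ∑ α ∈ (Finset.Iic β).filter (fun α => ∑ i, α i = n), ∏ j, (β j).choose (α j)
      = (∑ j, β j).choose n := by
  have h : ((1 + Polynomial.X : Polynomial ℕ)) ^ (∑ j, β j) =
      ∑ α ∈ Finset.Iic β,
        Polynomial.C (∏ j, (β j).choose (α j)) * Polynomial.X ^ (∑ j, α j) := by
    have hI : Finset.Iic β = Fintype.piFinset (fun j => Finset.Iic (β j)) := by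
      ext α
      simp [Pi.le_def]
    have h1 : ∀ b : ℕ, (1 + Polynomial.X : Polynomial ℕ) ^ b =
        ∑ t ∈ Finset.Iic b, Polynomial.C (b.choose t) * Polynomial.X ^ t := by
      intro b
      have hb : Finset.Iic b = Finset.range (b + 1) := by
        ext t
        simp
      rw [hb, add_comm, add_pow]
      refine Finset.sum_congr rfl fun t _ => ?_
      simp [mul_comm]
    rw [← Finset.prod_pow_eq_pow_sum, hI]
    simp_rw [h1]
    rw [Finset.prod_univ_sum]
    refine Finset.sum_congr rfl fun α _ => ?_
    rw [Finset.prod_mul_distrib, Finset.prod_pow_eq_pow_sum, map_prod]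
  have hc := congrArg (fun p => Polynomial.coeff p n) h
  simp only [Polynomial.coeff_one_add_X_pow, Polynomial.finsetSum_coeff,
    Polynomial.coeff_C_mul, Polynomial.coeff_X_pow, Nat.cast_id] at hc
  rw [hc, Finset.sum_filter]
  refine Finset.sum_congr rfl fun α _ => ?_
  simp [eq_comm]

/-- The identity `β! = α! (β - α)! ∏ C(β_j, α_j)` for multi-indices `α ≤ β`. -/
lemma prod_choose_mul_factorials {m : ℕ} {α β : Fin m → ℕ} (h : α ≤ β) :
    (∏ j, (β j).choose (α j)) * (∏ j, (α j).factorial) * (∏ j, ((β - α) j).factorial)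
      = ∏ j, (β j).factorial := by
  rw [← Finset.prod_mul_distrib, ← Finset.prod_mul_distrib]
  exact Finset.prod_congr rfl fun j _ => Nat.choose_mul_factorial_mul_factorial (h j)

/-- The diagonal-entry computation in the proof of Theorem 3.3: for `ρ̂(α) = a(|α|)·|α|!/α!`
and `|β| ≥ k ≥ 1`,
`Σ_{α ≤ β, |α| ≤ k} (−1)^{|α|} (k!/(α!(k−|α|)!)) ρ̂(β−α)/ρ̂(β)
  = (1/a(|β|)) Σ_{i=0}^{k} (−1)^i C(k,i) a(|β|−i)`. -/
theorem stmt_19 (m k : ℕ) (hm : 1 ≤ m) (hk : 1 ≤ k)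
    (a : ℕ → ℝ) (ha : ∀ i, 0 < a i)
    (β : Fin m → ℕ) (hβ : k ≤ ∑ i, β i) :
    (∑ α ∈ (Finset.Iic β).filter (fun α => ∑ i, α i ≤ k),
        (-1 : ℝ) ^ (∑ i, α i) *
          ((k.factorial : ℝ) /
            (((∏ i, (α i).factorial : ℕ) : ℝ) * ((k - ∑ i, α i).factorial : ℝ))) *
          (rhoHat m a (β - α) / rhoHat m a β)) =
      (1 / a (∑ i, β i)) *
        ∑ i ∈ Finset.range (k + 1),
          (-1 : ℝ) ^ i * (Nat.choose k i : ℝ) * a ((∑ j, β j) - i) := by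
  set N := ∑ j, β j with hN
  have hterm : ∀ α ∈ (Finset.Iic β).filter (fun α => ∑ i, α i ≤ k),
      (-1 : ℝ) ^ (∑ i, α i) *
          ((k.factorial : ℝ) /
            (((∏ i, (α i).factorial : ℕ) : ℝ) * ((k - ∑ i, α i).factorial : ℝ))) *
          (rhoHat m a (β - α) / rhoHat m a β) =
      (-1 : ℝ) ^ (∑ i, α i) * ((k.factorial : ℝ) / ((k - ∑ i, α i).factorial : ℝ)) *
        (a (N - ∑ i, α i) * ((N - ∑ i, α i).factorial : ℝ) / (a N * (N.factorial : ℝ))) *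
        ((∏ j, (β j).choose (α j) : ℕ) : ℝ) := by
    intro α hα
    have hle : α ≤ β := Finset.mem_Iic.1 (Finset.mem_filter.1 hα).1
    have hsub : ∑ i, (β - α) i = N - ∑ i, α i := by
      simp only [Pi.sub_apply]
      exact Finset.sum_tsub_distrib _ fun i _ => hle i
    have hfac := congrArg (Nat.cast (R := ℝ)) (prod_choose_mul_factorials hle)
    rw [Nat.cast_mul, Nat.cast_mul] at hfac
    have hne : ∀ γ : Fin m → ℕ, ((∏ i, (γ i).factorial : ℕ) : ℝ) ≠ 0 := fun γ =>
      Nat.cast_ne_zero.2 (Finset.prod_ne_zero_iff.2 fun i _ => Nat.factorial_ne_zero _)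
    have h1 := hne α
    have h2 := hne (β - α)
    have h3 := hne β
    have h4 : ∀ n : ℕ, (n.factorial : ℝ) ≠ 0 := fun n =>
      Nat.cast_ne_zero.2 (Nat.factorial_ne_zero n)
    have h5 := h4 N
    have h6 := h4 (k - ∑ i, α i)
    have h7 := (ha N).ne'
    rw [rhoHat, rhoHat, hsub, ← hN]
    generalize ((∏ i, (α i).factorial : ℕ) : ℝ) = A at *
    generalize ((∏ i, ((β - α) i).factorial : ℕ) : ℝ) = D at *
    generalize ((∏ i, (β i).factorial : ℕ) : ℝ) = B at *
    rw [← hfac]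
    field_simp
  rw [Finset.sum_congr rfl hterm, ← Finset.sum_fiberwise_of_maps_to
    (t := Finset.range (k + 1)) (g := fun α : Fin m → ℕ => ∑ i, α i)
    (fun α hα => Finset.mem_range.2 (Nat.lt_succ_of_le (Finset.mem_filter.1 hα).2)),
    Finset.mul_sum]
  refine Finset.sum_congr rfl fun i hi => ?_
  have hik : i ≤ k := Nat.le_of_lt_succ (Finset.mem_range.1 hi)
  have hfil : ((Finset.Iic β).filter (fun α => ∑ i, α i ≤ k)).filter (fun α => ∑ j, α j = i)
      = (Finset.Iic β).filter (fun α => ∑ j, α j = i) := by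
    ext α
    simp only [Finset.mem_filter]
    constructor
    · exact fun h => ⟨h.1.1, h.2⟩
    · exact fun h => ⟨⟨h.1, h.2.trans_le hik⟩, h.2⟩
  rw [hfil]
  have hgroup : ∀ α ∈ (Finset.Iic β).filter (fun α => ∑ j, α j = i),
      (-1 : ℝ) ^ (∑ i, α i) * ((k.factorial : ℝ) / ((k - ∑ i, α i).factorial : ℝ)) *
        (a (N - ∑ i, α i) * ((N - ∑ i, α i).factorial : ℝ) / (a N * (N.factorial : ℝ))) *
        ((∏ j, (β j).choose (α j) : ℕ) : ℝ) =
      (-1 : ℝ) ^ i * ((k.factorial : ℝ) / ((k - i).factorial : ℝ)) *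
        (a (N - i) * ((N - i).factorial : ℝ) / (a N * (N.factorial : ℝ))) *
        ((∏ j, (β j).choose (α j) : ℕ) : ℝ) := by
    intro α hα
    rw [(Finset.mem_filter.1 hα).2]
  rw [Finset.sum_congr rfl hgroup, ← Finset.mul_sum, ← Nat.cast_sum, sum_prod_choose, ← hN,
    Nat.cast_choose ℝ hik, Nat.cast_choose ℝ (hik.trans hβ)]
  have h4 : ∀ n : ℕ, (n.factorial : ℝ) ≠ 0 := fun n =>
    Nat.cast_ne_zero.2 (Nat.factorial_ne_zero n)
  have h5 := h4 N
  have h6 := h4 (k - i)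
  have h7 := h4 (N - i)
  have h8 := h4 i
  have h9 := (ha N).ne'
  field_simp
end
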